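/- arXiv:1402.0799 — 10 statements merged into one kernel-verified Lean document; each statement's English description precedes it below -/
import Mathlib

section
/- Let G be a group and let H, K be subgroups of G with [G:H] = n and [G:K] = m both finite. Then for every g ∈ G, the number s of distinct left cosets of H contained in the double coset KgH and the number t of distinct right cosets of K contained in KgH are both finite and satisfy s·m = t·n (that is, s/t = n/m). -/
/-!
The left cosets of `H` inside `KgH` form the `K`-orbit of `gH` in `G ⧸ H`, and the stabilizer of
`gH` in `G` is `gHg⁻¹`, so there are `[K : K ∩ gHg⁻¹]` of them. Inversion turns the right cosets
of `K` inside `KgH` into the left cosets of `K` inside `Hg⁻¹K`, so there are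
`[H : H ∩ g⁻¹Kg] = [gHg⁻¹ : gHg⁻¹ ∩ K]` of these. Multiplying by `[G : K]` and by
`[G : gHg⁻¹] = [G : H]` respectively gives `[G : K ∩ gHg⁻¹]` in both cases.
-/

section DoubleCosetIndex

open DoubleCoset (doubleCoset doubleCoset_eq_image2)
open MulAction
open scoped Pointwise

variable {G : Type*} [Group G]

theorem relIndex_mul_index_comm (H K : Subgroup G) :
    H.relIndex K * K.index = K.relIndex H * H.index := by
  rw [← Subgroup.inf_relIndex_right, Subgroup.relIndex_mul_index inf_le_right,
    ← Subgroup.inf_relIndex_left, Subgroup.relIndex_mul_index inf_le_left]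

theorem card_orbit_subgroup {α : Type*} [MulAction G α] (K : Subgroup G) (a : α) :
    Nat.card (orbit K a) = (stabilizer G a).relIndex K :=
  (index_stabilizer K a).symm

theorem stabilizer_mk_eq_conj_smul (H : Subgroup G) (g : G) :
    stabilizer G (g : G ⧸ H) = MulAut.conj g • H := by
  have mk_eq_smul : (g : G ⧸ H) = g • ((1 : G) : G ⧸ H) := by
    rw [MulAction.Quotient.smul_coe, smul_eq_mul, mul_one]
  rw [mk_eq_smul, stabilizer_smul_eq_stabilizer_map_conj, stabilizer_quotient]
  rfl

theorem image_doubleCoset_eq_setOf {α β : Type*} [Mul α] (f : α → β) (a : α) (s t : Set α) :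
    f '' doubleCoset a s t = {b | ∃ x ∈ s, ∃ y ∈ t, b = f (x * a * y)} := by
  ext b
  simp only [doubleCoset_eq_image2, Set.image_image2, Set.mem_image2, Set.mem_ofPred_eq, eq_comm]

theorem inv_doubleCoset {α : Type*} [DivisionMonoid α] (a : α) (s t : Set α) :
    (doubleCoset a s t)⁻¹ = doubleCoset a⁻¹ t⁻¹ s⁻¹ := by
  simp only [doubleCoset, mul_inv_rev, Set.inv_singleton, mul_assoc]

theorem image_mk_doubleCoset_eq_orbit (H K : Subgroup G) (g : G) :
    ((↑) : G → G ⧸ H) '' doubleCoset g K H = orbit K (g : G ⧸ H) := by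
  rw [image_doubleCoset_eq_setOf]
  ext q
  constructor
  · rintro ⟨k, hk, h, hh, rfl⟩
    exact ⟨⟨k, hk⟩, (QuotientGroup.mk_mul_of_mem (k * g) hh).symm⟩
  · rintro ⟨⟨k, hk⟩, rfl⟩
    exact ⟨k, hk, 1, H.one_mem, by rw [mul_one]; rfl⟩

theorem card_image_mk_doubleCoset (H K : Subgroup G) (g : G) :
    Nat.card (((↑) : G → G ⧸ H) '' doubleCoset g K H) = (MulAut.conj g • H).relIndex K := by
  rw [image_mk_doubleCoset_eq_orbit, ← stabilizer_mk_eq_conj_smul]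
  exact card_orbit_subgroup K (g : G ⧸ H)

theorem quotientRightRelEquivQuotientLeftRel_image_mk (K : Subgroup G) (s : Set G) :
    QuotientGroup.quotientRightRelEquivQuotientLeftRel K ''
        ((Quotient.mk'' : G → Quotient (QuotientGroup.rightRel K)) '' s) =
      ((↑) : G → G ⧸ K) '' s⁻¹ := by
  rw [← Set.image_inv_eq_inv, Set.image_image, Set.image_image]
  rfl

theorem card_image_rightRel_mk_doubleCoset (H K : Subgroup G) (g : G) :
    Nat.card ((Quotient.mk'' : G → Quotient (QuotientGroup.rightRel K)) '' doubleCoset g K H) =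
      K.relIndex (MulAut.conj g • H) := by
  rw [← Nat.card_image_of_injective
      (QuotientGroup.quotientRightRelEquivQuotientLeftRel K).injective,
    quotientRightRelEquivQuotientLeftRel_image_mk, inv_doubleCoset, inv_coe_set, inv_coe_set,
    card_image_mk_doubleCoset, ← Subgroup.relIndex_pointwise_smul (MulAut.conj g), smul_smul,
    ← map_mul, mul_inv_cancel, map_one, one_smul]

theorem card_leftCosets_mul_index_eq_card_rightCosets_mul_index (H K : Subgroup G) (g : G) :
    Nat.card (((↑) : G → G ⧸ H) '' doubleCoset g K H) * K.index =
      Nat.card ((Quotient.mk'' : G → Quotient (QuotientGroup.rightRel K)) '' doubleCoset g K H) *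
        H.index := by
  have index_conj : (MulAut.conj g • H).index = H.index :=
    Subgroup.index_map_equiv H (MulAut.conj g)
  rw [card_image_mk_doubleCoset, card_image_rightRel_mk_doubleCoset, relIndex_mul_index_comm,
    index_conj]

end DoubleCosetIndex

/-- If `[G:H] = n` and `[G:K] = m` are finite, then for each `g ∈ G` the set of left cosets
of `H` contained in the double coset `KgH` and the set of right cosets of `K` contained in
`KgH` are both finite, and their cardinalities `s`, `t` satisfy `s * m = t * n`
(i.e. `s / t = n / m`). -/
theorem stmt_1 {G : Type*} [Group G] (H K : Subgroup G) (n m : ℕ)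
    (hn : H.index = n) (hm : K.index = m) (hn0 : n ≠ 0) (hm0 : m ≠ 0) (g : G) :
    {q : G ⧸ H | ∃ k ∈ K, ∃ h ∈ H, q = QuotientGroup.mk (k * g * h)}.Finite ∧
    {q : Quotient (QuotientGroup.rightRel K) |
      ∃ k ∈ K, ∃ h ∈ H, q = Quotient.mk'' (k * g * h)}.Finite ∧
    Nat.card {q : G ⧸ H | ∃ k ∈ K, ∃ h ∈ H, q = QuotientGroup.mk (k * g * h)} * m =
      Nat.card {q : Quotient (QuotientGroup.rightRel K) |
        ∃ k ∈ K, ∃ h ∈ H, q = Quotient.mk'' (k * g * h)} * n := by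
  subst hn hm
  have : H.FiniteIndex := ⟨hn0⟩
  have : K.FiniteIndex := ⟨hm0⟩
  have : Finite (Quotient (QuotientGroup.rightRel K)) :=
    .of_equiv _ (QuotientGroup.quotientRightRelEquivQuotientLeftRel K).symm
  refine ⟨Set.toFinite _, Set.toFinite _, ?_⟩
  have card_eq := card_leftCosets_mul_index_eq_card_rightCosets_mul_index H K g
  rwa [image_doubleCoset_eq_setOf, image_doubleCoset_eq_setOf] at card_eq
end

section
/- Let G be a group and let H, K be subgroups of G with [G:H] = n and [G:K] = m finite, where m ≥ n. Then there exists a set T ⊆ G which is a left transversal for H in G and which is contained in some right transversal for K in G. Moreover, if H = K then there exists a left-right transversal for H in G. -/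
/-- A left transversal for `H` in `G`: a set containing exactly one element of each left
coset of `H`. -/
def IsLeftTransversal {G : Type*} [Group G] (H : Subgroup G) (T : Set G) : Prop :=
  ∀ g : G, ∃! t, t ∈ T ∧ g⁻¹ * t ∈ H

/-- A right transversal for `H` in `G`: a set containing exactly one element of each right
coset of `H`. -/
def IsRightTransversal {G : Type*} [Group G] (H : Subgroup G) (T : Set G) : Prop :=
  ∀ g : G, ∃! t, t ∈ T ∧ t * g⁻¹ ∈ H

/-!
The group `G` acts on `G ⧸ H × G ⧸ K`, and the right coset `Kt` is encoded by the left coset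
`t⁻¹K`: there is `t` with `tH = x` and `t⁻¹K = y` exactly when `(x, K)` and `(H, y)` lie in the same
orbit. Counting an orbit along both projections shows that, for each orbit, the number of such `x`
is to the number of such `y` as `[G : H]` is to `[G : K]`. So if `[G : H] ≤ [G : K]`, the `x`
of each orbit inject into its `y`, and these injections choose distinct right cosets
of `K` meeting the various left cosets of `H`.
-/

open Function Set MulAction

section Counting

variable {X Y : Type*}

theorem exists_injective_comp_eq_of_encard_fiber_le {D : Type*} {φ : X → D} {ψ : Y → D}
    (hfin : ∀ d, (φ ⁻¹' {d}).Finite) (hle : ∀ d, (φ ⁻¹' {d}).encard ≤ (ψ ⁻¹' {d}).encard) :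
    ∃ f : X → Y, Injective f ∧ ψ ∘ f = φ := by
  rcases isEmpty_or_nonempty X with _ | ⟨⟨x⟩⟩
  · exact ⟨isEmptyElim, injective_of_subsingleton _, Subsingleton.elim _ _⟩
  have : Nonempty Y := by
    have hx : (φ ⁻¹' {φ x}).encard ≠ 0 := encard_ne_zero_of_mem rfl
    exact (encard_ne_zero.mp (hx.bot_lt.trans_le (hle _)).ne').to_type
  choose e hmaps hinj using fun d ↦ (hfin d).exists_injOn_of_encard_le (hle d)
  have hcomp (x : X) : ψ (e (φ x) x) = φ x := hmaps (φ x) rfl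
  refine ⟨fun x ↦ e (φ x) x, fun x x' (h : e (φ x) x = e (φ x') x') ↦ ?_, funext hcomp⟩
  have hφ : φ x' = φ x := by rw [← hcomp x, ← hcomp x', h]
  exact hinj (φ x) rfl hφ (hφ ▸ h)

variable {G : Type*} [Group G] [MulAction G X] [MulAction G Y]

theorem encard_setOf_rel_eq_card_mul [IsPretransitive G X] {r : X → Y → Prop}
    (hr : ∀ (g : G) x y, r (g • x) (g • y) ↔ r x y) (x₀ : X) :
    {p : X × Y | r p.1 p.2}.encard = ENat.card X * {y | r x₀ y}.encard := by
  choose g hg using exists_smul_eq G x₀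
  have fiberEquiv (x : X) : {y // r x y} ≃ {y // r x₀ y} :=
    ((MulAction.toPerm (g x)).subtypeEquiv fun y ↦ by
      rw [toPerm_apply, ← hr (g x) x₀ y, hg x]).symm
  calc {p : X × Y | r p.1 p.2}.encard
    _ = ENat.card (X × {y // r x₀ y}) := ENat.card_congr <|
      (Equiv.subtypeProdEquivSigmaSubtype r).trans (Equiv.sigmaEquivProdOfEquiv fiberEquiv)
    _ = ENat.card X * {y | r x₀ y}.encard := ENat.card_prod _ _

theorem card_mul_encard_setOf_rel_comm [IsPretransitive G X] [IsPretransitive G Y]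
    {r : X → Y → Prop} (hr : ∀ (g : G) x y, r (g • x) (g • y) ↔ r x y) (x₀ : X) (y₀ : Y) :
    ENat.card X * {y | r x₀ y}.encard = ENat.card Y * {x | r x y₀}.encard := by
  rw [← encard_setOf_rel_eq_card_mul hr x₀,
    ← encard_setOf_rel_eq_card_mul (r := fun y x ↦ r x y) (fun g y x ↦ hr g x y) y₀]
  exact encard_congr ((Equiv.prodComm X Y).subtypeEquiv fun _ ↦ Iff.rfl)

theorem encard_setOf_rel_le_of_card_le [IsPretransitive G X] [IsPretransitive G Y] [Finite X]
    (hXY : ENat.card X ≤ ENat.card Y) {r : X → Y → Prop}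
    (hr : ∀ (g : G) x y, r (g • x) (g • y) ↔ r x y) (x₀ : X) (y₀ : Y) :
    {x | r x y₀}.encard ≤ {y | r x₀ y}.encard := by
  have : Nonempty X := ⟨x₀⟩
  refine (ENat.mul_le_mul_left_iff ENat.card_ne_zero (ENat.card_lt_top_of_finite (α := X)).ne).mp ?_
  calc ENat.card X * {x | r x y₀}.encard
    _ ≤ ENat.card Y * {x | r x y₀}.encard := by gcongr
    _ = ENat.card X * {y | r x₀ y}.encard := (card_mul_encard_setOf_rel_comm hr x₀ y₀).symm

variable (G) in
theorem exists_smul_eq_and_injective_inv_smul [IsPretransitive G X] [IsPretransitive G Y]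
    [Finite X] (hXY : ENat.card X ≤ ENat.card Y) (x₀ : X) (y₀ : Y) :
    ∃ t : X → G, (∀ x, t x • x₀ = x) ∧ Injective fun x ↦ (t x)⁻¹ • y₀ := by
  let orbitOf : X × Y → orbitRel.Quotient G (X × Y) := Quotient.mk _
  have orbitOf_smul (g : G) (x : X) (y : Y) : orbitOf (g • x, g • y) = orbitOf (x, y) :=
    Quotient.sound (mem_orbit (x, y) g)
  obtain ⟨f, hf, hfo⟩ := exists_injective_comp_eq_of_encard_fiber_le
    (φ := fun x ↦ orbitOf (x, y₀)) (ψ := fun y ↦ orbitOf (x₀, y)) (fun _ ↦ toFinite _)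
    fun ω ↦ encard_setOf_rel_le_of_card_le (G := G) hXY (r := fun x y ↦ orbitOf (x, y) = ω)
      (fun g x y ↦ by rw [orbitOf_smul]) x₀ y₀
  have hmem (x : X) : ∃ g : G, g • (x₀, f x) = (x, y₀) :=
    mem_orbit_iff.mp (Quotient.exact (congrFun hfo x).symm)
  choose t ht using hmem
  have hinv (x : X) : (t x)⁻¹ • y₀ = f x := inv_smul_eq_iff.mpr (congrArg Prod.snd (ht x)).symm
  exact ⟨t, fun x ↦ congrArg Prod.fst (ht x), by simpa only [hinv] using hf⟩

end Counting

section Transversal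

theorem bijOn_univ_iff_existsUnique {α β : Type*} {f : α → β} {s : Set α} :
    BijOn f s univ ↔ ∀ b, ∃! a, a ∈ s ∧ f a = b := by
  refine ⟨fun h b ↦ ?_, fun h ↦ ⟨mapsTo_univ f s, fun a ha a' ha' haa' ↦ ?_, fun b _ ↦ ?_⟩⟩
  · obtain ⟨a, ha, rfl⟩ := h.surjOn (mem_univ b)
    exact ⟨a, ⟨ha, rfl⟩, fun a' ha' ↦ h.injOn ha'.1 ha ha'.2⟩
  · exact (h (f a')).unique ⟨ha, haa'⟩ ⟨ha', rfl⟩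
  · exact (h b).exists

variable {G : Type*} [Group G] {H K : Subgroup G} {T T' : Set G}

theorem isLeftTransversal_iff_bijOn :
    IsLeftTransversal H T ↔ BijOn ((↑) : G → G ⧸ H) T univ := by
  simp only [bijOn_univ_iff_existsUnique, IsLeftTransversal, QuotientGroup.mk_surjective.forall,
    ← QuotientGroup.eq, eq_comm]

theorem isRightTransversal_iff_bijOn_inv :
    IsRightTransversal K T ↔ BijOn (fun t ↦ ((t⁻¹ : G) : G ⧸ K)) T univ := by
  simp only [bijOn_univ_iff_existsUnique, IsRightTransversal,
    (QuotientGroup.mk_surjective.comp inv_surjective).forall, comp_apply, QuotientGroup.eq, inv_inv]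

theorem IsLeftTransversal.encard_eq (hT : IsLeftTransversal H T) :
    T.encard = ENat.card (G ⧸ H) :=
  (encard_congr (isLeftTransversal_iff_bijOn.mp hT).equiv).trans (encard_univ _)

theorem IsRightTransversal.encard_eq (hT : IsRightTransversal K T) :
    T.encard = ENat.card (G ⧸ K) :=
  (encard_congr (isRightTransversal_iff_bijOn_inv.mp hT).equiv).trans (encard_univ _)

theorem IsLeftTransversal.eq_of_subset_isRightTransversal [H.FiniteIndex]
    (hT : IsLeftTransversal H T) (hT' : IsRightTransversal H T') (hsub : T ⊆ T') : T = T' := by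
  have hfin : T.Finite := by
    rw [← encard_lt_top_iff, hT.encard_eq]
    exact ENat.card_lt_top_of_finite
  exact hfin.eq_of_subset_of_encard_le hsub (hT'.encard_eq.trans hT.encard_eq.symm).le

theorem exists_subset_isRightTransversal_of_injOn
    (hT : InjOn (fun t ↦ ((t⁻¹ : G) : G ⧸ K)) T) : ∃ T', T ⊆ T' ∧ IsRightTransversal K T' := by
  have hsurj : Surjective fun t : G ↦ ((t⁻¹ : G) : G ⧸ K) :=
    QuotientGroup.mk_surjective.comp inv_surjective
  obtain ⟨T', hsub, hT'⟩ :=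
    hT.bijOn_image.exists_extend (subset_univ _) hsurj.range_eq.ge
  exact ⟨T', hsub, isRightTransversal_iff_bijOn_inv.mpr hT'⟩

theorem exists_isLeftTransversal_injOn_inv [H.FiniteIndex]
    (hHK : ENat.card (G ⧸ H) ≤ ENat.card (G ⧸ K)) :
    ∃ T, IsLeftTransversal H T ∧ InjOn (fun t ↦ ((t⁻¹ : G) : G ⧸ K)) T := by
  obtain ⟨t, ht, hinj⟩ := exists_smul_eq_and_injective_inv_smul G hHK
    ((1 : G) : G ⧸ H) ((1 : G) : G ⧸ K)
  simp only [Quotient.smul_coe, smul_eq_mul, mul_one] at ht hinj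
  have hbij : BijOn ((↑) : G → G ⧸ H) (range t) univ :=
    ⟨mapsTo_univ _ _, (LeftInverse.rightInvOn_range ht).injOn,
      fun x _ ↦ ⟨t x, mem_range_self x, ht x⟩⟩
  exact ⟨range t, isLeftTransversal_iff_bijOn.mpr hbij,
    Injective.injOn_range (g := fun t ↦ ((t⁻¹ : G) : G ⧸ K)) hinj⟩

end Transversal

theorem stmt_2_general {G : Type*} [Group G] (H K : Subgroup G) [H.FiniteIndex]
    (hHK : ENat.card (G ⧸ H) ≤ ENat.card (G ⧸ K)) :
    (∃ T T' : Set G, IsLeftTransversal H T ∧ IsRightTransversal K T' ∧ T ⊆ T') ∧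
    (H = K → ∃ T : Set G, IsLeftTransversal H T ∧ IsRightTransversal H T) := by
  obtain ⟨T, hT, hinj⟩ := exists_isLeftTransversal_injOn_inv hHK
  obtain ⟨T', hsub, hT'⟩ := exists_subset_isRightTransversal_of_injOn hinj
  refine ⟨⟨T, T', hT, hT', hsub⟩, ?_⟩
  rintro rfl
  obtain rfl := hT.eq_of_subset_isRightTransversal hT' hsub
  exact ⟨T, hT, hT'⟩

/-- If `[G:H] = n` and `[G:K] = m` are finite with `m ≥ n`, then there is a left transversal
`T` for `H` which is contained in some right transversal for `K`; moreover if `H = K` then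
there is a left-right transversal for `H`. -/
theorem stmt_2 {G : Type*} [Group G] (H K : Subgroup G) (n m : ℕ)
    (hn : H.index = n) (hm : K.index = m) (hn0 : n ≠ 0) (hm0 : m ≠ 0) (hnm : n ≤ m) :
    (∃ T T' : Set G, IsLeftTransversal H T ∧ IsRightTransversal K T' ∧ T ⊆ T') ∧
    (H = K → ∃ T : Set G, IsLeftTransversal H T ∧ IsRightTransversal H T) := by
  have : H.FiniteIndex := ⟨hn ▸ hn0⟩
  have : K.FiniteIndex := ⟨hm ▸ hm0⟩
  exact stmt_2_general H K (by simpa [ENat.card_eq_coe_natCard, ← Subgroup.index_eq_card, hn, hm])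
end

section
/- Let G be a group, H a subgroup of G, and S a generating n-tuple of G. Then there is a generating n-tuple S' of G, Nielsen equivalent to S, such that no left coset of H other than H itself contains more than one entry of S' (the coset H may contain several entries). The analogous statement holds for right cosets of H. -/
/-- A single Nielsen move on an `n`-tuple of elements of `G`: replace an entry `g i` by
`g j * g i`, `(g j)⁻¹ * g i`, `g i * g j` or `g i * (g j)⁻¹` for some `j ≠ i` (standard
moves), or replace an entry by its inverse, or transpose two entries (extended moves). -/
def IsNielsenMove {G : Type*} [Group G] {n : ℕ} (S S' : Fin n → G) : Prop :=
  (∃ i j, i ≠ j ∧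
    (S' = Function.update S i (S j * S i) ∨ S' = Function.update S i ((S j)⁻¹ * S i) ∨
     S' = Function.update S i (S i * S j) ∨ S' = Function.update S i (S i * (S j)⁻¹))) ∨
  (∃ i, S' = Function.update S i (S i)⁻¹) ∨
  (∃ i j, i ≠ j ∧ S' = S ∘ Equiv.swap i j)

/-- Two `n`-tuples are Nielsen equivalent if they differ by a finite sequence of Nielsen
moves. -/
def NielsenEquiv {G : Type*} [Group G] {n : ℕ} (S S' : Fin n → G) : Prop :=
  Relation.ReflTransGen IsNielsenMove S S'

/-!
Among the tuples Nielsen equivalent to `S`, choose one with the fewest entries outside `H`. If two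
of its entries `a`, `b` lay in the same left coset of `H` other than `H`, the standard move
`b ↦ a⁻¹ * b` would bring `b` into `H` and lower that number. Inverting every entry exchanges left
and right cosets and is itself a sequence of Nielsen moves, which settles right cosets.
-/

section

variable {ι : Type*} [DecidableEq ι]

theorem ncard_update_notMem_lt [Finite ι] {α : Type*} {s : Set α} {f : ι → α} {i : ι} {x : α}
    (hi : f i ∉ s) (hx : x ∈ s) :
    {k | Function.update f i x k ∉ s}.ncard < {k | f k ∉ s}.ncard := by
  have hset : {k | Function.update f i x k ∉ s} = {k | f k ∉ s} \ {i} := by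
    ext k
    obtain rfl | hk := eq_or_ne k i <;> simp [*]
  rw [hset]
  exact Set.ncard_sdiff_singleton_lt_of_mem hi

theorem closure_range_update_eq_closure_range {G : Type*} [Group G] {S : ι → G} {i : ι}
    {x : G} (h : ∀ K : Subgroup G, (∀ k ≠ i, S k ∈ K) → (x ∈ K ↔ S i ∈ K)) :
    Subgroup.closure (Set.range (Function.update S i x)) = Subgroup.closure (Set.range S) := by
  refine eq_of_forall_ge_iff fun K => ?_
  simp only [Subgroup.closure_le, Set.range_subset_iff, SetLike.mem_coe]
  rw [Function.forall_update_iff S fun _ y => y ∈ K]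
  constructor
  · rintro ⟨hx, hne⟩ k
    obtain rfl | hk := eq_or_ne k i
    · exact (h K hne).1 hx
    · exact hne k hk
  · intro hS
    exact ⟨(h K fun k _ => hS k).2 (hS i), fun k _ => hS k⟩

end

section

variable {G : Type*} [Group G] {n : ℕ} {S S' : Fin n → G}

theorem IsNielsenMove.closure_range_eq (h : IsNielsenMove S S') :
    Subgroup.closure (Set.range S') = Subgroup.closure (Set.range S) := by
  rcases h with ⟨i, j, hij, rfl | rfl | rfl | rfl⟩ | ⟨i, rfl⟩ | ⟨i, j, -, rfl⟩
  · exact closure_range_update_eq_closure_range fun K hK => K.mul_mem_cancel_left (hK j hij.symm)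
  · exact closure_range_update_eq_closure_range fun K hK =>
      K.mul_mem_cancel_left (K.inv_mem (hK j hij.symm))
  · exact closure_range_update_eq_closure_range fun K hK => K.mul_mem_cancel_right (hK j hij.symm)
  · exact closure_range_update_eq_closure_range fun K hK =>
      K.mul_mem_cancel_right (K.inv_mem (hK j hij.symm))
  · exact closure_range_update_eq_closure_range fun K _ => K.inv_mem_iff
  · rw [(Equiv.swap i j).surjective.range_comp S]

theorem NielsenEquiv.closure_range_eq (h : NielsenEquiv S S') :
    Subgroup.closure (Set.range S') = Subgroup.closure (Set.range S) := by
  induction h with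
  | refl => rfl
  | tail _ hmove ih => exact hmove.closure_range_eq.trans ih

theorem nielsenEquiv_inv (S : Fin n → G) : NielsenEquiv S S⁻¹ := by
  suffices h : ∀ s : Finset (Fin n), NielsenEquiv S (s.piecewise S⁻¹ S) by
    simpa only [Finset.piecewise_univ] using h Finset.univ
  intro s
  induction s using Finset.induction_on with
  | empty =>
    rw [Finset.piecewise_empty]
    exact Relation.ReflTransGen.refl
  | insert i s hi ih =>
    refine ih.tail (Or.inr (Or.inl ⟨i, ?_⟩))
    rw [Finset.piecewise_insert, Finset.piecewise_eq_of_notMem _ _ _ hi, Pi.inv_apply]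

theorem exists_nielsenEquiv_forall_mem_of_inv_mul_mem (H : Subgroup G) (S : Fin n → G) :
    ∃ S' : Fin n → G, NielsenEquiv S S' ∧ ∀ i j, i ≠ j → (S' i)⁻¹ * S' j ∈ H → S' i ∈ H := by
  obtain ⟨S', hSS', hmin⟩ := exists_minimalFor_of_wellFoundedLT (NielsenEquiv S)
    (fun T => {k | T k ∉ (H : Set G)}.ncard) ⟨S, Relation.ReflTransGen.refl⟩
  refine ⟨S', hSS', fun i j hij hmem => ?_⟩
  by_contra hi
  have hj : S' j ∉ H := fun hj => hi (H.inv_mem_iff.1 ((H.mul_mem_cancel_right hj).1 hmem))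
  have hmove : IsNielsenMove S' (Function.update S' j ((S' i)⁻¹ * S' j)) :=
    Or.inl ⟨j, i, hij.symm, Or.inr (Or.inl rfl)⟩
  have hlt := ncard_update_notMem_lt hj hmem
  exact hlt.not_ge (hmin (hSS'.tail hmove) hlt.le)

end

theorem stmt_3_general {G : Type*} [Group G] (H : Subgroup G) {n : ℕ} (S : Fin n → G) :
    (∃ S' : Fin n → G, NielsenEquiv S S' ∧
      Subgroup.closure (Set.range S') = Subgroup.closure (Set.range S) ∧
      ∀ i j, i ≠ j → (S' i)⁻¹ * S' j ∈ H → S' i ∈ H) ∧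
    (∃ S' : Fin n → G, NielsenEquiv S S' ∧
      Subgroup.closure (Set.range S') = Subgroup.closure (Set.range S) ∧
      ∀ i j, i ≠ j → S' j * (S' i)⁻¹ ∈ H → S' i ∈ H) := by
  obtain ⟨T, hST, hT⟩ := exists_nielsenEquiv_forall_mem_of_inv_mul_mem H S
  have hST' : NielsenEquiv S T⁻¹ := hST.trans (nielsenEquiv_inv T)
  refine ⟨⟨T, hST, hST.closure_range_eq, hT⟩, T⁻¹, hST', hST'.closure_range_eq, ?_⟩
  intro i j hij hmem
  simp only [Pi.inv_apply, inv_inv] at hmem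
  exact H.inv_mem (hT i j hij (by simpa only [mul_inv_rev, inv_inv] using H.inv_mem hmem))

/-- Given a generating `n`-tuple `S` of `G` and a subgroup `H`, there is a Nielsen
equivalent generating `n`-tuple `S'` such that no left coset of `H` other than `H` itself
contains more than one entry of `S'`; and likewise (separately) for right cosets. -/
theorem stmt_3 {G : Type*} [Group G] (H : Subgroup G) {n : ℕ} (S : Fin n → G)
    (hS : Subgroup.closure (Set.range S) = ⊤) :
    (∃ S' : Fin n → G, NielsenEquiv S S' ∧ Subgroup.closure (Set.range S') = ⊤ ∧
      ∀ i j, i ≠ j → (S' i)⁻¹ * S' j ∈ H → S' i ∈ H) ∧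
    (∃ S' : Fin n → G, NielsenEquiv S S' ∧ Subgroup.closure (Set.range S') = ⊤ ∧
      ∀ i j, i ≠ j → S' j * (S' i)⁻¹ ∈ H → S' i ∈ H) := by
  simpa only [hS] using stmt_3_general H S
end

section
/- Let G be a group, H a subgroup of G, and S a generating n-tuple of G with n ≤ [G:H] (allowing the possibility that H has infinite index in G). Then there is a generating n-tuple S' of G, Nielsen equivalent to S, such that no two entries of S' lie in the same left coset of H. -/
/-!
Among the tuples Nielsen equivalent to `S`, pick one meeting as many left cosets of `H` as possible;
call it `S` again and let `C` be the finite set of cosets it meets. Suppose `S a` and `S b` lie in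
the same coset for some `a ≠ b`. The entry `S a` may then be replaced without losing a coset, so by
maximality every replacement lands in a coset belonging to `C`. Let `K` be generated by the other
entries. Nielsen moves replace `S a` by any `k * S a` or `S a * k` with `k ∈ K`. As `S a ∈ S b * H`,
replacing `S a` by `k * (S b)⁻¹ * S a ∈ k * H` gives `k * H ∈ C`; hence `C` consists of the cosets
of the elements of `K`. Replacing `S a` by `S a * k` gives `S a • C ⊆ C`. So the finite set `C` is
stable under `K` and `S a`, hence consists of the cosets of all elements generated by `S`. There are
at least `n` of these, but an `n`-tuple with two entries in one coset meets fewer than `n`.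
-/

open Function MulAction Set Subgroup
open scoped Pointwise

section Group

variable {G : Type*} [Group G]

theorem sup_zpowers_mul_left {K : Subgroup G} {x : G} (hx : x ∈ K) (z : G) :
    K ⊔ zpowers (x * z) = K ⊔ zpowers z := by
  have hxK : ∀ w, x ∈ K ⊔ zpowers w := fun w ↦ mem_sup_left hx
  refine le_antisymm (sup_le le_sup_left (zpowers_le.2 ?_))
    (sup_le le_sup_left (zpowers_le.2 ?_))
  · exact mul_mem (hxK z) (mem_sup_right (mem_zpowers z))
  · exact (mul_mem_cancel_left (hxK _)).1 (mem_sup_right (mem_zpowers (x * z)))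

theorem sup_zpowers_mul_right {K : Subgroup G} {x : G} (hx : x ∈ K) (z : G) :
    K ⊔ zpowers (z * x) = K ⊔ zpowers z := by
  rw [← zpowers_inv, mul_inv_rev, sup_zpowers_mul_left (inv_mem hx), zpowers_inv]

theorem closure_range_update {ι : Type*} [DecidableEq ι] (S : ι → G) (a : ι) (z : G) :
    closure (range (update S a z)) = closure (S '' {a}ᶜ) ⊔ zpowers z := by
  have himage : update S a z '' {a}ᶜ = S '' {a}ᶜ :=
    image_congr fun _ hi ↦ update_of_ne hi z S
  rw [← image_univ, ← compl_union_self {a}, image_union, image_singleton, update_self, himage,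
    Subgroup.closure_union, zpowers_eq_closure]

theorem closure_range_eq_sup_zpowers {ι : Type*} (S : ι → G) (a : ι) :
    closure (range S) = closure (S '' {a}ᶜ) ⊔ zpowers (S a) := by
  classical
  rw [← closure_range_update, update_eq_self]

end Group

theorem injective_of_card_le_ncard_range {ι α : Type*} [Finite ι] {f : ι → α}
    (h : Nat.card ι ≤ (range f).ncard) : Injective f :=
  rangeFactorization_injective.1
    (rangeFactorization_surjective.bijective_of_nat_card_le h).injective

section Nielsen

variable {G : Type*} [Group G] {n : ℕ} {S T : Fin n → G}

theorem IsNielsenMove.closure_range_eq_s5 (h : IsNielsenMove S T) :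
    closure (range T) = closure (range S) := by
  rcases h with ⟨i, j, hij, h⟩ | ⟨i, rfl⟩ | ⟨i, j, -, rfl⟩
  · have hj : S j ∈ closure (S '' {i}ᶜ) := subset_closure ⟨j, hij.symm, rfl⟩
    rw [closure_range_eq_sup_zpowers S i]
    rcases h with rfl | rfl | rfl | rfl <;> rw [closure_range_update]
    · exact sup_zpowers_mul_left hj _
    · exact sup_zpowers_mul_left (inv_mem hj) _
    · exact sup_zpowers_mul_right hj _
    · exact sup_zpowers_mul_right (inv_mem hj) _
  · rw [closure_range_update, zpowers_inv, ← closure_range_eq_sup_zpowers]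
  · rw [(Equiv.swap i j).surjective.range_comp]

theorem NielsenEquiv.closure_range_eq_s5 (h : NielsenEquiv S T) :
    closure (range T) = closure (range S) := by
  induction h with
  | refl => rfl
  | tail _ hmove ih => exact hmove.closure_range_eq_s5.trans ih

theorem nielsenEquiv_update_mul_left {a : Fin n} {x : G} (hx : x ∈ closure (S '' {a}ᶜ)) :
    NielsenEquiv S (update S a (x * S a)) := by
  induction hx using closure_induction_left with
  | one => rw [one_mul, update_eq_self]; exact .refl
  | mul_left _ hs y _ ih =>
    obtain ⟨j, hj, rfl⟩ := hs
    exact ih.tail (.inl ⟨a, j, Ne.symm hj, .inl (by simp [update_of_ne hj, mul_assoc])⟩)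
  | inv_mul_cancel _ hs y _ ih =>
    obtain ⟨j, hj, rfl⟩ := hs
    exact ih.tail (.inl ⟨a, j, Ne.symm hj, .inr (.inl (by simp [update_of_ne hj, mul_assoc]))⟩)

theorem nielsenEquiv_update_mul_right {a : Fin n} {x : G} (hx : x ∈ closure (S '' {a}ᶜ)) :
    NielsenEquiv S (update S a (S a * x)) := by
  induction hx using closure_induction_right with
  | one => rw [mul_one, update_eq_self]; exact .refl
  | mul_right y _ _ hs ih =>
    obtain ⟨j, hj, rfl⟩ := hs
    exact ih.tail (.inl ⟨a, j, Ne.symm hj,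
      .inr (.inr (.inl (by simp [update_of_ne hj, mul_assoc])))⟩)
  | mul_inv_cancel y _ _ hs ih =>
    obtain ⟨j, hj, rfl⟩ := hs
    exact ih.tail (.inl ⟨a, j, Ne.symm hj,
      .inr (.inr (.inr (by simp [update_of_ne hj, mul_assoc])))⟩)

end Nielsen

section Cosets

variable {G : Type*} [Group G]

/-- The set of left cosets of `H` met by the subset `s` of `G`; a tuple `S` enters as `range S`. -/
def cosetsMet (H : Subgroup G) (s : Set G) : Set (G ⧸ H) :=
  (↑) '' s

variable {H : Subgroup G}

theorem cosetsMet_range {ι : Type*} (S : ι → G) :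
    cosetsMet H (range S) = range fun i ↦ (S i : G ⧸ H) :=
  (range_comp _ S).symm

theorem finite_cosetsMet {s : Set G} (hs : s.Finite) : (cosetsMet H s).Finite :=
  hs.image _

theorem cosetsMet_univ : cosetsMet H univ = univ :=
  image_univ_of_surjective QuotientGroup.mk_surjective

theorem cosetsMet_sup_zpowers_of_smul_subset {K : Subgroup G} {g : G}
    (hfin : (cosetsMet H (K : Set G)).Finite) (hg : g • cosetsMet H K ⊆ cosetsMet H K) :
    cosetsMet H ↑(K ⊔ zpowers g) = cosetsMet H K := by
  have hstab : K ⊔ zpowers g ≤ stabilizer G (cosetsMet H (K : Set G)) := by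
    refine sup_le (fun k hk ↦ ?_) (zpowers_le.2 ?_) <;>
      rw [mem_stabilizer_set_iff_smul_set_subset hfin]
    · rintro _ ⟨_, ⟨l, hl, rfl⟩, rfl⟩
      exact ⟨k * l, mul_mem hk hl, rfl⟩
    · exact hg
  refine Subset.antisymm ?_ (image_mono (SetLike.coe_subset_coe.2 le_sup_left))
  rintro _ ⟨l, hl, rfl⟩
  rw [← mem_stabilizer_iff.1 (hstab hl)]
  exact ⟨_, ⟨1, one_mem K, rfl⟩, congrArg _ (mul_one l)⟩

theorem cosetsMet_range_subset_update {ι : Type*} [DecidableEq ι] {S : ι → G} {a b : ι}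
    (hba : b ≠ a) (hab : (S a : G ⧸ H) = S b) (x : G) :
    cosetsMet H (range S) ⊆ cosetsMet H (range (update S a x)) := by
  rw [cosetsMet_range, cosetsMet_range]
  rintro _ ⟨k, rfl⟩
  obtain rfl | hka := eq_or_ne k a
  · exact ⟨b, by simp only [update_of_ne hba, hab]⟩
  · exact ⟨k, by simp only [update_of_ne hka]⟩

end Cosets

section Maximal

variable {G : Type*} [Group G] {n : ℕ}

/-- The tuple `S` meets the largest number of left cosets of `H` among the tuples Nielsen
equivalent to it. -/
def IsCosetMaximal (H : Subgroup G) (S : Fin n → G) : Prop :=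
  ∀ ⦃T⦄, NielsenEquiv S T → (cosetsMet H (range T)).ncard ≤ (cosetsMet H (range S)).ncard

theorem exists_nielsenEquiv_isCosetMaximal (H : Subgroup G) (S : Fin n → G) :
    ∃ T, NielsenEquiv S T ∧ IsCosetMaximal H T := by
  let count (T : Fin n → G) : ℕ := (cosetsMet H (range T)).ncard
  have hbound : count '' {T | NielsenEquiv S T} ⊆ Iic n := by
    rintro _ ⟨T, -, rfl⟩
    simp only [count, cosetsMet_range]
    exact (Finite.card_range_le fun i ↦ (T i : G ⧸ H)).trans_eq (Nat.card_fin n)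
  obtain ⟨T, hST, hmax⟩ := ((finite_Iic n).subset hbound).exists_maximalFor' _ _ ⟨S, .refl⟩
  refine ⟨T, hST, fun U hTU ↦ ?_⟩
  exact (le_total _ _).elim (hmax (Relation.ReflTransGen.trans hST hTU)) id

namespace IsCosetMaximal

variable {H : Subgroup G} {S : Fin n → G}

theorem mk_mem_cosetsMet (hS : IsCosetMaximal H S) {a b : Fin n} (hba : b ≠ a)
    (hab : (S a : G ⧸ H) = S b) {x : G} (hx : NielsenEquiv S (update S a x)) :
    (x : G ⧸ H) ∈ cosetsMet H (range S) := by
  rw [eq_of_subset_of_ncard_le (cosetsMet_range_subset_update hba hab x) (hS hx)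
    (finite_cosetsMet (finite_range _))]
  exact ⟨x, ⟨a, update_self a x S⟩, rfl⟩

theorem cosetsMet_closure_compl (hS : IsCosetMaximal H S) {a b : Fin n}
    (hba : b ≠ a) (hab : (S a : G ⧸ H) = S b) :
    cosetsMet H (closure (S '' {a}ᶜ)) = cosetsMet H (range S) := by
  have hmem : ∀ k ≠ a, S k ∈ closure (S '' {a}ᶜ) := fun k hk ↦ subset_closure ⟨k, hk, rfl⟩
  refine Subset.antisymm ?_ ?_
  · rintro _ ⟨k, hk, rfl⟩
    have hcoset : ((k * (S b)⁻¹ * S a : G) : G ⧸ H) = k := by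
      rw [mul_assoc]
      exact QuotientGroup.mk_mul_of_mem k (QuotientGroup.eq.1 hab.symm)
    rw [← hcoset]
    exact hS.mk_mem_cosetsMet hba hab
      (nielsenEquiv_update_mul_left (mul_mem hk (inv_mem (hmem b hba))))
  · rintro _ ⟨_, ⟨k, rfl⟩, rfl⟩
    obtain rfl | hka := eq_or_ne k a
    · exact ⟨S b, hmem b hba, hab.symm⟩
    · exact ⟨S k, hmem k hka, rfl⟩

theorem cosetsMet_closure_range (hS : IsCosetMaximal H S) {a b : Fin n}
    (hba : b ≠ a) (hab : (S a : G ⧸ H) = S b) :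
    cosetsMet H (closure (range S)) = cosetsMet H (range S) := by
  have hC := hS.cosetsMet_closure_compl hba hab
  have hfin : (cosetsMet H (range S)).Finite := finite_cosetsMet (finite_range S)
  have hsmul : S a • cosetsMet H (range S) ⊆ cosetsMet H (range S) := by
    rintro _ ⟨q, hq, rfl⟩
    obtain ⟨k, hk, rfl⟩ := hC ▸ hq
    exact hS.mk_mem_cosetsMet hba hab (nielsenEquiv_update_mul_right hk)
  rw [← hC] at hfin hsmul
  rw [closure_range_eq_sup_zpowers S a, cosetsMet_sup_zpowers_of_smul_subset hfin hsmul, hC]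

theorem injective_or_cosetsMet_closure_range (hS : IsCosetMaximal H S) :
    Injective (fun i ↦ (S i : G ⧸ H)) ∨
      cosetsMet H (closure (range S)) = cosetsMet H (range S) := by
  refine or_iff_not_imp_left.2 fun hinj ↦ ?_
  obtain ⟨a, b, hab, hne⟩ := not_injective_iff.1 hinj
  exact hS.cosetsMet_closure_range hne.symm hab

end IsCosetMaximal

end Maximal

theorem stmt_5_general {G : Type*} [Group G] (H : Subgroup G) {n : ℕ} (S : Fin n → G)
    (hindex : (n : Cardinal) ≤ Cardinal.mk (cosetsMet H (closure (range S)))) :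
    ∃ S' : Fin n → G, NielsenEquiv S S' ∧ closure (range S') = closure (range S) ∧
      ∀ i j, i ≠ j → (S' i)⁻¹ * S' j ∉ H := by
  obtain ⟨T, hST, hmax⟩ := exists_nielsenEquiv_isCosetMaximal H S
  have hinj : Injective fun i ↦ (T i : G ⧸ H) := by
    refine hmax.injective_or_cosetsMet_closure_range.elim id fun hT ↦ ?_
    rw [← hST.closure_range_eq_s5, hT, cosetsMet_range, ← cast_ncard (finite_range _),
      Nat.cast_le] at hindex
    exact injective_of_card_le_ncard_range ((Nat.card_fin n).trans_le hindex)
  exact ⟨T, hST, hST.closure_range_eq_s5, fun i j hij hmem ↦ hij (hinj (QuotientGroup.eq.2 hmem))⟩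

/-- If `S` is a generating `n`-tuple of `G` and `H` is a subgroup with `n ≤ [G:H]`
(possibly `[G:H] = ∞`, expressed via the cardinality of `G ⧸ H`), then there is a
Nielsen-equivalent generating `n`-tuple `S'` no two of whose entries lie in the same left
coset of `H`. -/
theorem stmt_5 {G : Type*} [Group G] (H : Subgroup G) {n : ℕ} (S : Fin n → G)
    (hS : Subgroup.closure (Set.range S) = ⊤)
    (hindex : (n : Cardinal) ≤ Cardinal.mk (G ⧸ H)) :
    ∃ S' : Fin n → G, NielsenEquiv S S' ∧ Subgroup.closure (Set.range S') = ⊤ ∧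
      ∀ i j, i ≠ j → (S' i)⁻¹ * S' j ∉ H := by
  have hcosets : cosetsMet H (closure (range S)) = univ := by
    rw [hS, coe_top, cosetsMet_univ]
  simpa only [hS] using stmt_5_general H S (by rwa [hcosets, Cardinal.mk_univ])
end

section
/- Let G be a group, H a subgroup of finite index in G, and S a generating n-tuple of G such that no two distinct entries of S lie in the same left coset of H, no two distinct entries of S lie in the same right coset of H, and at most one entry of S lies in H. Then there is a left-right transversal T for H in G containing all the entries of S. -/
/-!
Left cosets of `K` and right cosets of `H` meet exactly when they lie in the same double coset
`HgK`. Hence a common transversal is a bijection between left and right cosets that respects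
double cosets, with a representative chosen in each intersection. A double coset `HgK` contains
`[H : H ∩ gKg⁻¹]` left cosets of `K` and `[K : K ∩ g⁻¹Hg]` right cosets of `H`; when these
agree, the finite partial matching given by the prescribed elements extends to a complete one,
one double coset at a time. For `H = K` of finite index they do agree: multiplied by `[G : H]`,
both become the index in `G` of conjugate subgroups.
-/

open Function Set MulAction
open scoped Pointwise

section Matching

variable {ι X α β γ : Type*}

theorem exists_equiv_extending_pair [Finite ι] (e₀ : α ≃ β) {f : ι → α} {g : ι → β}
    (hf : Injective f) (hg : Injective g) : ∃ e : α ≃ β, ∀ i, e (f i) = g i := by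
  obtain ⟨σ, hσ⟩ :=
    Equiv.Perm.exists_extending_pair (e₀ ∘ f) g (e₀.injective.comp hf) hg
  exact ⟨e₀.trans σ, hσ⟩

theorem exists_equiv_over_extending_pair [Finite ι] {p : α → γ} {q : β → γ}
    (hpq : ∀ c, Nonempty ({a // p a = c} ≃ {b // q b = c})) {f : ι → α} {g : ι → β}
    (hf : Injective f) (hg : Injective g) (hfg : ∀ i, p (f i) = q (g i)) :
    ∃ e : α ≃ β, (∀ a, q (e a) = p a) ∧ ∀ i, e (f i) = g i := by
  have exists_fiber_equiv (c : γ) : ∃ e : {a // p a = c} ≃ {b // q b = c},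
      ∀ i : {i // p (f i) = c}, e ⟨f i, i.2⟩ = ⟨g i, (hfg i).symm.trans i.2⟩ :=
    exists_equiv_extending_pair (hpq c).some
      (fun _ _ h => Subtype.ext (hf (congrArg Subtype.val h)))
      (fun _ _ h => Subtype.ext (hg (congrArg Subtype.val h)))
  choose e he using exists_fiber_equiv
  exact ⟨Equiv.ofFiberEquiv e, Equiv.ofFiberEquiv_map e,
    fun i => congrArg Subtype.val (he (p (f i)) ⟨i, rfl⟩)⟩

theorem existsUnique_mem_of_bijOn_univ {f : α → β} {T : Set α}
    (h : BijOn f T univ) (b : β) : ∃! t, t ∈ T ∧ f t = b := by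
  obtain ⟨t, ht, htb⟩ := h.surjOn (mem_univ b)
  exact ⟨t, ⟨ht, htb⟩, fun u hu => h.injOn hu.1 ht (hu.2.trans htb.symm)⟩

theorem bijOn_range_univ_of_bijective_comp {f : α → β} {t : ι → α} (h : Bijective (f ∘ t)) :
    BijOn f (range t) univ :=
  ⟨mapsTo_univ _ _, h.injective.injOn_range, by
    rw [SurjOn, ← range_comp, h.surjective.range_eq]⟩

theorem exists_section_through {l : X → α} {P : X → Prop} (hlift : ∀ a, ∃ x, l x = a ∧ P x)
    {s : ι → X} (hl : Injective (l ∘ s)) (hs : ∀ i, P (s i)) :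
    ∃ t : α → X, (∀ a, l (t a) = a ∧ P (t a)) ∧ ∀ i, t (l (s i)) = s i := by
  choose t₀ ht₀ using hlift
  refine ⟨extend (l ∘ s) s t₀, fun a => ?_, hl.extend_apply s t₀⟩
  by_cases ha : ∃ i, (l ∘ s) i = a
  · obtain ⟨i, rfl⟩ := ha
    rw [hl.extend_apply]
    exact ⟨rfl, hs i⟩
  · rw [extend_apply' _ _ _ ha]
    exact ht₀ a

theorem exists_common_transversal_of_fiber_equiv [Finite ι] {l : X → α} {r : X → β}
    {p : α → γ} {q : β → γ} (hpq : ∀ c, Nonempty ({a // p a = c} ≃ {b // q b = c}))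
    (hcomm : ∀ x, p (l x) = q (r x)) (hlift : ∀ a b, p a = q b → ∃ x, l x = a ∧ r x = b)
    {s : ι → X} (hl : Injective (l ∘ s)) (hr : Injective (r ∘ s)) :
    ∃ T : Set X, BijOn l T univ ∧ BijOn r T univ ∧ ∀ i, s i ∈ T := by
  obtain ⟨e, he, hes⟩ := exists_equiv_over_extending_pair hpq hl hr fun i => hcomm (s i)
  have exists_lift (a : α) : ∃ x, l x = a ∧ r x = e (l x) := by
    obtain ⟨x, rfl, hx⟩ := hlift a (e a) (he a).symm
    exact ⟨x, rfl, hx⟩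
  obtain ⟨t, ht, hts⟩ := exists_section_through exists_lift hl fun i => (hes i).symm
  have hlt : l ∘ t = id := funext fun a => (ht a).1
  have hrt : r ∘ t = e := funext fun a => (ht a).2.trans (congrArg e (ht a).1)
  exact ⟨range t, bijOn_range_univ_of_bijective_comp (hlt ▸ bijective_id),
    bijOn_range_univ_of_bijective_comp (hrt ▸ e.bijective), fun i => ⟨l (s i), hts i⟩⟩

end Matching

section Cosets

variable {G : Type*} [Group G] {H K : Subgroup G}

theorem IsLeftTransversal.of_bijOn {T : Set G} (h : BijOn ((↑) : G → G ⧸ K) T univ) :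
    IsLeftTransversal K T := fun g => by
  simpa only [eq_comm, QuotientGroup.eq] using existsUnique_mem_of_bijOn_univ h g

theorem IsRightTransversal.of_bijOn {T : Set G}
    (h : BijOn (fun g : G => ((g⁻¹ : G) : G ⧸ H)) T univ) : IsRightTransversal H T := fun g => by
  simpa only [QuotientGroup.eq, inv_inv] using existsUnique_mem_of_bijOn_univ h (g⁻¹ : G)

theorem doubleCoset_mk_inv_eq_iff {x y : G} :
    DoubleCoset.mk H K x⁻¹ = DoubleCoset.mk H K y⁻¹ ↔
      DoubleCoset.mk K H x = DoubleCoset.mk K H y := by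
  have inv_eq {H K : Subgroup G} {x y : G} (h : DoubleCoset.mk H K x = DoubleCoset.mk H K y) :
      DoubleCoset.mk K H x⁻¹ = DoubleCoset.mk K H y⁻¹ := by
    obtain ⟨a, ha, b, hb, rfl⟩ := (DoubleCoset.eq H K x y).mp h
    exact (DoubleCoset.eq K H _ _).mpr ⟨b⁻¹, K.inv_mem hb, a⁻¹, H.inv_mem ha, by group⟩
  exact ⟨fun h => by simpa only [inv_inv] using inv_eq h, inv_eq⟩

theorem mk_mem_orbit_mk_iff {x y : G} :
    (x : G ⧸ K) ∈ orbit H (y : G ⧸ K) ↔ DoubleCoset.mk H K x = DoubleCoset.mk H K y := by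
  rw [eq_comm, DoubleCoset.eq]
  constructor
  · rintro ⟨h, hxy⟩
    exact ⟨h, h.2, _, QuotientGroup.eq.mp hxy, (mul_inv_cancel_left _ _).symm⟩
  · rintro ⟨h, hh, k, hk, rfl⟩
    exact ⟨⟨h, hh⟩, (QuotientGroup.mk_mul_of_mem _ hk).symm⟩

variable (H K)

/-- The double coset `HxK` containing the left coset `xK`. -/
def leftCosetToDoubleCoset : G ⧸ K → DoubleCoset.Quotient (H : Set G) K :=
  Quotient.lift (DoubleCoset.mk H K) fun x y h =>
    (DoubleCoset.eq H K x y).mpr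
      ⟨1, H.one_mem, x⁻¹ * y, QuotientGroup.leftRel_apply.mp h, by group⟩

/-- The double coset `HxK` containing the right coset `Hx`. Right cosets are encoded by their
inverses, so `Hx` is represented by the left coset `x⁻¹H`. -/
def rightCosetToDoubleCoset : G ⧸ H → DoubleCoset.Quotient (H : Set G) K :=
  Quotient.lift (fun x => DoubleCoset.mk H K x⁻¹) fun _ _ h =>
    doubleCoset_mk_inv_eq_iff.mpr (congrArg (leftCosetToDoubleCoset K H) (Quotient.sound h))

variable {H K}

theorem leftCosetToDoubleCoset_mk_eq_rightCosetToDoubleCoset_mk_inv (x : G) :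
    leftCosetToDoubleCoset H K x = rightCosetToDoubleCoset H K (x⁻¹ : G) :=
  congrArg (DoubleCoset.mk H K) (inv_inv x).symm

theorem leftCosetToDoubleCoset_eq_mk_iff {a : G ⧸ K} {g : G} :
    leftCosetToDoubleCoset H K a = DoubleCoset.mk H K g ↔ a ∈ orbit H (g : G ⧸ K) := by
  obtain ⟨x, rfl⟩ := QuotientGroup.mk_surjective a
  exact mk_mem_orbit_mk_iff.symm

theorem rightCosetToDoubleCoset_eq_mk_iff {b : G ⧸ H} {g : G} :
    rightCosetToDoubleCoset H K b = DoubleCoset.mk H K g ↔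
      b ∈ orbit K ((g⁻¹ : G) : G ⧸ H) := by
  obtain ⟨x, rfl⟩ := QuotientGroup.mk_surjective b
  rw [mk_mem_orbit_mk_iff, ← doubleCoset_mk_inv_eq_iff, inv_inv]
  rfl

theorem exists_mem_leftCoset_inter_rightCoset {a : G ⧸ K} {b : G ⧸ H}
    (hab : leftCosetToDoubleCoset H K a = rightCosetToDoubleCoset H K b) :
    ∃ x : G, (x : G ⧸ K) = a ∧ ((x⁻¹ : G) : G ⧸ H) = b := by
  obtain ⟨x, rfl⟩ := QuotientGroup.mk_surjective a
  obtain ⟨y, rfl⟩ := QuotientGroup.mk_surjective b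
  obtain ⟨h, hh, k, hk, hy⟩ := (DoubleCoset.eq H K x y⁻¹).mp hab
  have hxk : (x * k)⁻¹ = y * h := by
    rw [← inv_inv y, hy]
    group
  exact ⟨x * k, QuotientGroup.mk_mul_of_mem x hk, hxk ▸ QuotientGroup.mk_mul_of_mem y hh⟩

theorem stabilizer_quotientGroup_mk (g : G) :
    stabilizer H (g : G ⧸ K) = (MulAut.conj g • K).subgroupOf H := by
  ext h
  rw [mem_stabilizer_iff, eq_comm, Subgroup.mem_subgroupOf,
    Subgroup.mem_pointwise_smul_iff_inv_smul_mem, ← map_inv, MulAut.smul_def,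
    MulAut.conj_apply, inv_inv, mul_assoc]
  exact QuotientGroup.eq

variable (H K) in
/-- The left cosets of `K` in the double coset `HgK` correspond to `H / (H ∩ gKg⁻¹)`. -/
noncomputable def orbitEquivQuotientConj (g : G) :
    orbit H (g : G ⧸ K) ≃ H ⧸ (MulAut.conj g • K).subgroupOf H :=
  (orbitEquivQuotientStabilizer H (g : G ⧸ K)).trans
    (Subgroup.quotientEquivOfEq (stabilizer_quotientGroup_mk g))

theorem nonempty_fiber_equiv
    (hHK : ∀ g : G, Nonempty (H ⧸ (MulAut.conj g • K).subgroupOf H ≃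
      K ⧸ (MulAut.conj g⁻¹ • H).subgroupOf K))
    (D : DoubleCoset.Quotient (H : Set G) K) :
    Nonempty ({a // leftCosetToDoubleCoset H K a = D} ≃
      {b // rightCosetToDoubleCoset H K b = D}) := by
  obtain ⟨g, rfl⟩ := Quotient.mk_surjective D
  obtain ⟨e⟩ := hHK g
  exact ⟨calc
    {a // leftCosetToDoubleCoset H K a = DoubleCoset.mk H K g}
    _ ≃ orbit H (g : G ⧸ K) := Equiv.subtypeEquivRight fun _ => leftCosetToDoubleCoset_eq_mk_iff
    _ ≃ H ⧸ (MulAut.conj g • K).subgroupOf H := orbitEquivQuotientConj H K g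
    _ ≃ K ⧸ (MulAut.conj g⁻¹ • H).subgroupOf K := e
    _ ≃ orbit K ((g⁻¹ : G) : G ⧸ H) := (orbitEquivQuotientConj K H g⁻¹).symm
    _ ≃ {b // rightCosetToDoubleCoset H K b = DoubleCoset.mk H K g} :=
      Equiv.subtypeEquivRight fun _ => rightCosetToDoubleCoset_eq_mk_iff.symm⟩

end Cosets

section Index

variable {G : Type*} [Group G] {H K : Subgroup G}

theorem relIndex_comm_of_index_eq (hK : K.index ≠ 0) (hHK : H.index = K.index) :
    H.relIndex K = K.relIndex H := by
  refine Nat.eq_of_mul_eq_mul_right (Nat.pos_of_ne_zero hK) ?_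
  calc
    H.relIndex K * K.index = (H ⊓ K).index := by
      rw [← Subgroup.inf_relIndex_right, Subgroup.relIndex_mul_index inf_le_right]
    _ = K.relIndex H * H.index := by
      rw [← Subgroup.inf_relIndex_left, Subgroup.relIndex_mul_index inf_le_left]
    _ = K.relIndex H * K.index := by rw [hHK]

theorem index_conj_smul (g : G) : (MulAut.conj g • H).index = H.index :=
  Subgroup.index_map_equiv H (MulAut.conj g)

theorem relIndex_conj_smul_eq (hH : H.index ≠ 0) (hHK : H.index = K.index) (g : G) :
    (MulAut.conj g • K).relIndex H = (MulAut.conj g⁻¹ • H).relIndex K := by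
  calc
    (MulAut.conj g • K).relIndex H = H.relIndex (MulAut.conj g • K) :=
      relIndex_comm_of_index_eq hH ((index_conj_smul g).trans hHK.symm)
    _ = (MulAut.conj g⁻¹ • H).relIndex K := by
      rw [← Subgroup.relIndex_pointwise_smul (MulAut.conj g⁻¹), map_inv, inv_smul_smul]

theorem nonempty_quotient_equiv_of_index_eq (hH : H.index ≠ 0) (hHK : H.index = K.index)
    (g : G) : Nonempty (H ⧸ (MulAut.conj g • K).subgroupOf H ≃
      K ⧸ (MulAut.conj g⁻¹ • H).subgroupOf K) := by
  have : H.FiniteIndex := ⟨hH⟩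
  have : (MulAut.conj g • K).FiniteIndex := ⟨by rwa [index_conj_smul, ← hHK]⟩
  have : (MulAut.conj g⁻¹ • H).FiniteIndex := ⟨by rwa [index_conj_smul]⟩
  exact Finite.card_eq.mp (relIndex_conj_smul_eq hH hHK g)

end Index

theorem stmt_8_general {G : Type*} [Group G] (H K : Subgroup G)
    (hHK : ∀ g : G, Nonempty (H ⧸ (MulAut.conj g • K).subgroupOf H ≃
      K ⧸ (MulAut.conj g⁻¹ • H).subgroupOf K))
    {ι : Type*} [Finite ι] (S : ι → G)
    (hleft : ∀ i j, i ≠ j → (S i)⁻¹ * S j ∉ K)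
    (hright : ∀ i j, i ≠ j → S j * (S i)⁻¹ ∉ H) :
    ∃ T : Set G, IsLeftTransversal K T ∧ IsRightTransversal H T ∧ ∀ i, S i ∈ T := by
  have left_injective : Injective fun i => (S i : G ⧸ K) := fun i j hij =>
    by_contra fun hne => hleft i j hne (QuotientGroup.eq.mp hij)
  have right_injective : Injective fun i => (((S i)⁻¹ : G) : G ⧸ H) := fun i j hij =>
    by_contra fun hne => hright j i (Ne.symm hne)
      (by simpa only [inv_inv] using QuotientGroup.eq.mp hij)
  obtain ⟨T, hleftT, hrightT, hST⟩ :=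
    exists_common_transversal_of_fiber_equiv (nonempty_fiber_equiv hHK)
      leftCosetToDoubleCoset_mk_eq_rightCosetToDoubleCoset_mk_inv
      (fun _ _ => exists_mem_leftCoset_inter_rightCoset) left_injective right_injective
  exact ⟨T, .of_bijOn hleftT, .of_bijOn hrightT, hST⟩

/-- If `H` has finite index in `G` and `S` is a generating `n`-tuple of `G` such that no
two distinct entries lie in the same left coset of `H`, no two distinct entries lie in the
same right coset of `H`, and at most one entry lies in `H`, then there is a left-right
transversal `T` for `H` containing all the entries of `S`. -/
theorem stmt_8 {G : Type*} [Group G] (H : Subgroup G) (hfin : H.index ≠ 0) {n : ℕ}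
    (S : Fin n → G) (hS : Subgroup.closure (Set.range S) = ⊤)
    (hleft : ∀ i j, i ≠ j → (S i)⁻¹ * S j ∉ H)
    (hright : ∀ i j, i ≠ j → S j * (S i)⁻¹ ∉ H)
    (hone : ∀ i j, S i ∈ H → S j ∈ H → i = j) :
    ∃ T : Set G, IsLeftTransversal H T ∧ IsRightTransversal H T ∧ ∀ i, S i ∈ T :=
  stmt_8_general H H (nonempty_quotient_equiv_of_index_eq hfin rfl) S hleft hright
end

section
/- Let G be a finitely generated group with d(G) ≤ 3 and let H be a subgroup of finite index in G. Then the following are equivalent: (1) there exists a left-right transversal T for H in G with ⟨T⟩ = G; (2) [G:H] ≥ d(G). -/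
/-!
Call two elements separated when they lie in distinct left cosets and in distinct right cosets of
`H`. The left and the right cosets of `H` inside a double coset `HgH` are equally many and meet
pairwise, so a maximal pairwise separated set meets every coset: every pairwise separated set
extends to a left-right transversal. It remains to find a pairwise separated generating set.

If two generators are not separated, then one of them can be replaced by an element of `H`. For
three generators this leaves the case `G = ⟨h, k, x⟩` with `h, k ∈ H` and `x ∉ H`. Replacing `h` by
`x * h * x` gives separated generators unless `x * h * x ∈ H`. If this fails, and likewise for `k`
and `h * k⁻¹` in place of `h`, then `x * x ∈ H`, the group `G` preserves `{H, xH}`, and `H` has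
index 2.
-/

section

open MulAction Subgroup
open scoped Pointwise

variable {G : Type*} [Group G] {H : Subgroup G}

theorem isLeftTransversal_iff_isComplement {T : Set G} :
    IsLeftTransversal H T ↔ IsComplement T (H : Set G) := by
  rw [isComplement_iff_existsUnique_inv_mul_mem]
  refine forall_congr' fun g => ?_
  have mem_iff (t : G) : g⁻¹ * t ∈ H ↔ t⁻¹ * g ∈ H := by
    rw [← H.inv_mem_iff, mul_inv_rev, inv_inv]
  simp only [mem_iff, SetLike.mem_coe, ExistsUnique, Subtype.exists, Subtype.forall,
    Subtype.mk.injEq, exists_prop, and_assoc, and_imp]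

theorem IsLeftTransversal.rank_le_index [Group.FG G] [H.FiniteIndex] {T : Set G}
    (hT : IsLeftTransversal H T) (hgen : closure T = ⊤) : Group.rank G ≤ H.index := by
  have hTH := isLeftTransversal_iff_isComplement.1 hT
  have hTfin : T.Finite := hTH.finite_left
  rw [← hTH.ncard_left, Set.ncard_eq_toFinset_card T hTfin]
  exact Group.rank_le (by rwa [hTfin.coe_toFinset])

/-! ### Cosets inside a double coset -/

theorem mk_mem_orbit_mk_iff_s10 {a g : G} :
    (a : G ⧸ H) ∈ orbit H (g : G ⧸ H) ↔ a ∈ DoubleCoset.doubleCoset g (H : Set G) H := by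
  rw [DoubleCoset.mem_doubleCoset]
  constructor
  · rintro ⟨h, hh⟩
    exact ⟨h, h.2, _, QuotientGroup.eq.1 hh, (mul_inv_cancel_left _ _).symm⟩
  · rintro ⟨h, hh, k, hk, rfl⟩
    exact ⟨⟨h, hh⟩, (QuotientGroup.mk_mul_of_mem (h * g) hk).symm⟩

theorem mk_inv_mem_orbit_mk_inv {a g : G} (ha : (a : G ⧸ H) ∈ orbit H (g : G ⧸ H)) :
    ((a⁻¹ : G) : G ⧸ H) ∈ orbit H ((g⁻¹ : G) : G ⧸ H) := by
  rw [mk_mem_orbit_mk_iff_s10, DoubleCoset.mem_doubleCoset] at ha ⊢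
  obtain ⟨h, hh, k, hk, rfl⟩ := ha
  exact ⟨k⁻¹, H.inv_mem hk, h⁻¹, H.inv_mem hh, by group⟩

theorem mk_inv_mem_orbit_mk_inv_iff {a g : G} :
    ((a⁻¹ : G) : G ⧸ H) ∈ orbit H ((g⁻¹ : G) : G ⧸ H) ↔ (a : G ⧸ H) ∈ orbit H (g : G ⧸ H) :=
  ⟨fun ha => by simpa only [inv_inv] using mk_inv_mem_orbit_mk_inv ha, mk_inv_mem_orbit_mk_inv⟩

theorem exists_mk_eq_and_mk_inv_eq {g : G} {q : G ⧸ H}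
    (hq : q ∈ orbit H ((g⁻¹ : G) : G ⧸ H)) :
    ∃ u : G, (u : G ⧸ H) = g ∧ ((u⁻¹ : G) : G ⧸ H) = q := by
  obtain ⟨h, rfl⟩ := hq
  refine ⟨g * (h : G)⁻¹, QuotientGroup.mk_mul_of_mem g (H.inv_mem h.2), ?_⟩
  rw [mul_inv_rev, inv_inv]
  rfl

theorem ncard_orbit_mk (g : G) :
    (orbit H (g : G ⧸ H)).ncard = (MulAut.conj g • H).relIndex H := by
  have stabilizer_mk : stabilizer G (g : G ⧸ H) = MulAut.conj g • H := by
    have := stabilizer_smul_eq_stabilizer_map_conj g ((1 : G) : G ⧸ H)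
    rwa [Quotient.smul_coe, smul_eq_mul, mul_one, stabilizer_quotient] at this
  rw [← index_stabilizer, ← stabilizer_mk]
  rfl

theorem relIndex_conj_smul_comm [H.FiniteIndex] (g : G) :
    (MulAut.conj g • H).relIndex H = H.relIndex (MulAut.conj g • H) := by
  have index_conj : (MulAut.conj g • H).index = H.index := index_map_equiv H (MulAut.conj g)
  apply Nat.eq_of_mul_eq_mul_right (Nat.pos_of_ne_zero H.index_ne_zero_of_finite)
  calc (MulAut.conj g • H).relIndex H * H.index
      = (H ⊓ MulAut.conj g • H).index := by
        rw [← inf_relIndex_left, relIndex_mul_index inf_le_left]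
    _ = H.relIndex (MulAut.conj g • H) * H.index := by
        rw [← inf_relIndex_right, ← index_conj, relIndex_mul_index inf_le_right]

theorem ncard_orbit_mk_inv [H.FiniteIndex] (g : G) :
    (orbit H ((g⁻¹ : G) : G ⧸ H)).ncard = (orbit H (g : G ⧸ H)).ncard := by
  rw [ncard_orbit_mk, ncard_orbit_mk, relIndex_conj_smul_comm g,
    ← relIndex_pointwise_smul (MulAut.conj g), map_inv, smul_inv_smul]

/-! ### Extending separated sets to transversals -/

/-- Two elements are separated by `H` if they lie in distinct left cosets and in distinct right
cosets of `H`. The sets of pairwise separated elements are the partial left-right transversals. -/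
def CosetSeparated (H : Subgroup G) (x y : G) : Prop :=
  x⁻¹ * y ∉ H ∧ x * y⁻¹ ∉ H

theorem cosetSeparated_iff_mk_ne {x y : G} :
    CosetSeparated H x y ↔
      (x : G ⧸ H) ≠ y ∧ ((x⁻¹ : G) : G ⧸ H) ≠ ((y⁻¹ : G) : G ⧸ H) := by
  rw [CosetSeparated, Ne, Ne, QuotientGroup.eq, QuotientGroup.eq, inv_inv]

instance : Std.Symm (CosetSeparated H) where
  symm x y h := by
    rw [cosetSeparated_iff_mk_ne] at h ⊢
    exact ⟨h.1.symm, h.2.symm⟩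

theorem cosetSeparated_of_notMem_of_mem {x y : G} (hx : x ∉ H) (hy : y ∈ H) :
    CosetSeparated H x y := by
  rw [CosetSeparated, H.mul_mem_cancel_right hy, H.mul_mem_cancel_right (H.inv_mem hy),
    H.inv_mem_iff]
  exact ⟨hx, hx⟩

theorem injOn_mk_of_pairwise {T : Set G} (hT : T.Pairwise (CosetSeparated H)) :
    T.InjOn fun t : G => (t : G ⧸ H) := fun x hx y hy hxy => by
  by_contra hne
  exact (cosetSeparated_iff_mk_ne.1 (hT hx hy hne)).1 hxy

theorem injOn_mk_inv_of_pairwise {T : Set G} (hT : T.Pairwise (CosetSeparated H)) :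
    T.InjOn fun t : G => ((t⁻¹ : G) : G ⧸ H) := fun x hx y hy hxy => by
  by_contra hne
  exact (cosetSeparated_iff_mk_ne.1 (hT hx hy hne)).2 hxy

theorem exists_mem_orbit_forall_mk_inv_ne [H.FiniteIndex] {T : Set G}
    (hT : T.Pairwise (CosetSeparated H)) {g : G} (hg : ∀ t ∈ T, (t : G ⧸ H) ≠ g) :
    ∃ q ∈ orbit H ((g⁻¹ : G) : G ⧸ H), ∀ t ∈ T, ((t⁻¹ : G) : G ⧸ H) ≠ q := by
  let D : Set G := {t ∈ T | (t : G ⧸ H) ∈ orbit H (g : G ⧸ H)}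
  have hDT : D ⊆ T := Set.sep_subset _ _
  have image_ssubset : (fun t : G => (t : G ⧸ H)) '' D ⊂ orbit H (g : G ⧸ H) := by
    refine Set.ssubset_iff_exists.2
      ⟨Set.image_subset_iff.2 fun t ht => ht.2, g, mem_orbit_self _, ?_⟩
    rintro ⟨t, ht, htg⟩
    exact hg t ht.1 htg
  have card_lt : ((fun t : G => ((t⁻¹ : G) : G ⧸ H)) '' D).ncard <
      (orbit H ((g⁻¹ : G) : G ⧸ H)).ncard := by
    rw [((injOn_mk_inv_of_pairwise hT).mono hDT).ncard_image,
      ← ((injOn_mk_of_pairwise hT).mono hDT).ncard_image, ncard_orbit_mk_inv]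
    exact Set.ncard_lt_ncard image_ssubset
  obtain ⟨q, hq, hqD⟩ := Set.exists_mem_notMem_of_ncard_lt_ncard card_lt
  refine ⟨q, hq, fun t ht htq => hqD ⟨t, ⟨ht, ?_⟩, htq⟩⟩
  rwa [← mk_inv_mem_orbit_mk_inv_iff, htq]

theorem exists_mk_eq_of_maximal [H.FiniteIndex] {T : Set G}
    (hT : Maximal (fun T : Set G => T.Pairwise (CosetSeparated H)) T) (g : G) :
    ∃ t ∈ T, (t : G ⧸ H) = g := by
  by_contra! hg
  obtain ⟨q, hq, hTq⟩ := exists_mem_orbit_forall_mk_inv_ne hT.prop hg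
  obtain ⟨u, hug, huq⟩ := exists_mk_eq_and_mk_inv_eq hq
  have separated_insert : (insert u T).Pairwise (CosetSeparated H) := by
    refine hT.prop.insert_of_symm fun t ht _ => cosetSeparated_iff_mk_ne.2 ⟨?_, ?_⟩
    · rw [hug]
      exact (hg t ht).symm
    · rw [huq]
      exact (hTq t ht).symm
  exact hg u (hT.mem_of_prop_insert separated_insert) hug

theorem isLeftTransversal_of_maximal [H.FiniteIndex] {T : Set G}
    (hT : Maximal (fun T : Set G => T.Pairwise (CosetSeparated H)) T) :
    IsLeftTransversal H T := by
  intro g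
  obtain ⟨t, ht, htg⟩ := exists_mk_eq_of_maximal hT g
  refine ⟨t, ⟨ht, QuotientGroup.eq.1 htg.symm⟩, fun s hs => ?_⟩
  exact injOn_mk_of_pairwise hT.prop hs.1 ht ((QuotientGroup.eq.2 hs.2).symm.trans htg.symm)

theorem IsLeftTransversal.isRightTransversal [H.FiniteIndex] {T : Set G}
    (hT : IsLeftTransversal H T) (hsep : T.Pairwise (CosetSeparated H)) :
    IsRightTransversal H T := by
  have card_eq : Nat.card T = Nat.card (G ⧸ H) :=
    (isLeftTransversal_iff_isComplement.1 hT).card_left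
  have surjective : Function.Surjective fun t : T => (((t : G)⁻¹ : G) : G ⧸ H) :=
    ((injOn_mk_inv_of_pairwise hsep).injective.bijective_of_nat_card_le card_eq.ge).surjective
  have mk_eq_iff (t g : G) : ((t⁻¹ : G) : G ⧸ H) = ((g⁻¹ : G) : G ⧸ H) ↔ t * g⁻¹ ∈ H := by
    rw [QuotientGroup.eq, inv_inv]
  intro g
  obtain ⟨⟨t, ht⟩, htg⟩ := surjective ((g⁻¹ : G) : G ⧸ H)
  refine ⟨t, ⟨ht, (mk_eq_iff t g).1 htg⟩, fun s hs => ?_⟩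
  exact injOn_mk_inv_of_pairwise hsep hs.1 ht (((mk_eq_iff s g).2 hs.2).trans htg.symm)

theorem exists_leftRight_transversal_superset [H.FiniteIndex] {S : Set G}
    (hS : S.Pairwise (CosetSeparated H)) :
    ∃ T, S ⊆ T ∧ IsLeftTransversal H T ∧ IsRightTransversal H T := by
  obtain ⟨T, hST, hT⟩ := zorn_subset_nonempty {T : Set G | T.Pairwise (CosetSeparated H)}
    (fun c hc hchain _ => ⟨⋃₀ c, (Set.pairwise_sUnion hchain.directedOn).2 hc,
      fun _ => Set.subset_sUnion_of_mem⟩) S hS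
  have hleft : IsLeftTransversal H T := isLeftTransversal_of_maximal hT
  exact ⟨T, hST, hleft, hleft.isRightTransversal hT.prop⟩

/-! ### Separated generating sets -/

theorem closure_eq_top_of_subset {A B : Set G} (hA : closure A = ⊤)
    (hAB : A ⊆ closure B) : closure B = ⊤ :=
  top_unique (hA ▸ (closure_le _).2 hAB)

theorem closure_insert_mul_mul_eq_top {S : Set G} {a b y : G} (ha : a ∈ closure S)
    (hb : b ∈ closure S) (hgen : closure (insert y S) = ⊤) :
    closure (insert (a * y * b) S) = ⊤ := by
  have closure_le : closure S ≤ closure (insert (a * y * b) S) :=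
    closure_mono (Set.subset_insert _ _)
  refine closure_eq_top_of_subset hgen
    (Set.insert_subset ?_ (subset_closure.trans closure_le))
  have mem : a⁻¹ * (a * y * b) * b⁻¹ ∈ closure (insert (a * y * b) S) :=
    mul_mem (mul_mem (inv_mem (closure_le ha)) (subset_closure (Set.mem_insert _ _)))
      (inv_mem (closure_le hb))
  simpa [mul_assoc] using mem

theorem closure_insert_inv_eq_top {S : Set G} {y : G} (hgen : closure (insert y S) = ⊤) :
    closure (insert y⁻¹ S) = ⊤ :=
  closure_eq_top_of_subset hgen (Set.insert_subset
    (inv_mem_iff.1 (subset_closure (Set.mem_insert _ _)))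
    ((Set.subset_insert _ _).trans subset_closure))

theorem exists_mem_closure_insert_eq_top {S : Set G} {x y : G} (hx : x ∈ S)
    (hgen : closure (insert y S) = ⊤) (hxy : ¬ CosetSeparated H x y) :
    ∃ h ∈ H, closure (insert h S) = ⊤ := by
  rw [CosetSeparated, not_and_or, not_not, not_not] at hxy
  rcases hxy with hleft | hright
  · refine ⟨x⁻¹ * y, hleft, ?_⟩
    simpa only [mul_one] using
      closure_insert_mul_mul_eq_top (inv_mem (subset_closure hx)) (one_mem _) hgen
  · refine ⟨x * y⁻¹, hright, ?_⟩
    simpa only [mul_one] using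
      closure_insert_mul_mul_eq_top (subset_closure hx) (one_mem _)
        (closure_insert_inv_eq_top hgen)

theorem exists_notMem_of_closure_eq_top {S : Set G} (hgen : closure S = ⊤) (hH : H ≠ ⊤) :
    ∃ x ∈ S, x ∉ H := by
  by_contra! hS
  exact hH (top_unique (hgen ▸ (closure_le H).2 hS))

theorem index_eq_two_of_closure_insert_eq_top {S : Set G} {x : G}
    (hgen : closure (insert x S) = ⊤) (hx : x ∉ H) (hxx : x * x ∈ H)
    (hS : ∀ s ∈ S, s ∈ H ∧ x⁻¹ * s * x ∈ H) : H.index = 2 := by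
  let B : Set (G ⧸ H) := {((1 : G) : G ⧸ H), (x : G ⧸ H)}
  have smul_B (g : G) : g • B = {(g : G ⧸ H), ((g * x : G) : G ⧸ H)} := by
    simp [B, Set.smul_set_insert]
  have stabilizer_B : stabilizer G B = ⊤ := by
    refine top_unique (hgen ▸ (closure_le _).2 (Set.insert_subset ?_ fun s hs => ?_))
    · have mk_xx : ((x * x : G) : G ⧸ H) = (1 : G) := (QuotientGroup.eq.2 (by simpa using hxx)).symm
      rw [SetLike.mem_coe, mem_stabilizer_iff, smul_B, mk_xx, Set.pair_comm]
    · have mk_s : (s : G ⧸ H) = (1 : G) := (QuotientGroup.eq.2 (by simpa using (hS s hs).1)).symm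
      have mk_sx : ((s * x : G) : G ⧸ H) = x :=
        (QuotientGroup.eq.2 (by simpa only [mul_assoc] using (hS s hs).2)).symm
      rw [SetLike.mem_coe, mem_stabilizer_iff, smul_B, mk_s, mk_sx]
  have B_eq_univ : B = Set.univ := by
    refine Set.eq_univ_of_forall fun q => ?_
    obtain ⟨g, rfl⟩ := QuotientGroup.mk_surjective q
    have hg : g • B = B := mem_stabilizer_iff.1 (stabilizer_B ▸ mem_top g)
    rw [← hg, smul_B]
    exact Set.mem_insert _ _
  have one_ne : ((1 : G) : G ⧸ H) ≠ x := fun h => hx (by simpa using QuotientGroup.eq.1 h)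
  rw [Subgroup.index, ← Set.ncard_univ, ← B_eq_univ, Set.ncard_pair one_ne]

/-- The group has a generating set whose elements are pairwise separated by `H`; for `H` of finite
index such a set extends to a generating left-right transversal. -/
def HasSeparatedGenerators (H : Subgroup G) : Prop :=
  ∃ S : Set G, S.Pairwise (CosetSeparated H) ∧ closure S = ⊤

theorem hasSeparatedGenerators_of_triple {x y z : G} (hgen : closure {x, y, z} = ⊤)
    (hxy : CosetSeparated H x y) (hxz : CosetSeparated H x z) (hyz : CosetSeparated H y z) :
    HasSeparatedGenerators H := by
  refine ⟨_, ?_, hgen⟩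
  simp only [Set.pairwise_insert_of_symm, Set.pairwise_singleton, Set.mem_insert_iff,
    Set.mem_singleton_iff, forall_eq_or_imp, forall_eq, true_and]
  exact ⟨fun _ => hyz, fun _ => hxy, fun _ => hxz⟩

theorem hasSeparatedGenerators_of_pair {x y : G} (hgen : closure {x, y} = ⊤) (hH : H ≠ ⊤) :
    HasSeparatedGenerators H := by
  by_cases hxy : CosetSeparated H x y
  · exact ⟨_, Set.pairwise_pair_of_symm.2 fun _ => hxy, hgen⟩
  rw [Set.pair_comm] at hgen
  obtain ⟨h, hh, hgen⟩ := exists_mem_closure_insert_eq_top (Set.mem_singleton x) hgen hxy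
  have hx : x ∉ H := by
    simpa [hh] using exists_notMem_of_closure_eq_top hgen hH
  rw [Set.pair_comm] at hgen
  exact ⟨_, Set.pairwise_pair_of_symm.2 fun _ => cosetSeparated_of_notMem_of_mem hx hh, hgen⟩

theorem hasSeparatedGenerators_of_mul_mul_notMem {h k x : G} (hgen : closure {h, k, x} = ⊤)
    (hh : h ∈ H) (hk : k ∈ H) (hx : x ∉ H) (hxhx : x * h * x ∉ H) :
    HasSeparatedGenerators H := by
  have x_mem : x ∈ closure {k, x} := subset_closure (by simp)
  have separated : CosetSeparated H x (x * h * x) := by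
    constructor
    · rwa [mul_assoc, inv_mul_cancel_left, H.mul_mem_cancel_left hh]
    · rwa [mul_inv_rev, mul_inv_cancel_left, H.inv_mem_iff, H.mul_mem_cancel_right hh]
  exact hasSeparatedGenerators_of_triple (closure_insert_mul_mul_eq_top x_mem x_mem hgen)
    (cosetSeparated_of_notMem_of_mem hxhx hk) (symm separated)
    (symm (cosetSeparated_of_notMem_of_mem hx hk))

theorem hasSeparatedGenerators_of_mem_of_mem {h k x : G} (hgen : closure {h, k, x} = ⊤)
    (hh : h ∈ H) (hk : k ∈ H) (hH : H ≠ ⊤) (hindex : H.index ≠ 2) :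
    HasSeparatedGenerators H := by
  have hx : x ∉ H := by
    simpa [hh, hk] using exists_notMem_of_closure_eq_top hgen hH
  by_contra hnot
  have hxhx : x * h * x ∈ H := by
    by_contra hxhx
    exact hnot (hasSeparatedGenerators_of_mul_mul_notMem hgen hh hk hx hxhx)
  have hxkx : x * k * x ∈ H := by
    by_contra hxkx
    rw [Set.insert_comm] at hgen
    exact hnot (hasSeparatedGenerators_of_mul_mul_notMem hgen hk hh hx hxkx)
  have hxhkx : x * (h * k⁻¹) * x ∈ H := by
    by_contra hxhkx
    have hgen' : closure {h * k⁻¹, k, x} = ⊤ := by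
      simpa only [one_mul] using closure_insert_mul_mul_eq_top (one_mem _)
        (inv_mem (subset_closure (Set.mem_insert k {x}))) hgen
    exact hnot (hasSeparatedGenerators_of_mul_mul_notMem hgen'
      (H.mul_mem hh (H.inv_mem hk)) hk hx hxhkx)
  have hxx : x * x ∈ H := by
    have : x * x = x * k * x * (x * h * x)⁻¹ * (x * (h * k⁻¹) * x) := by group
    rw [this]
    exact H.mul_mem (H.mul_mem hxkx (H.inv_mem hxhx)) hxhkx
  have conj_mem {s : G} (hxsx : x * s * x ∈ H) : x⁻¹ * s * x ∈ H := by
    have : x⁻¹ * s * x = (x * x)⁻¹ * (x * s * x) := by group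
    rw [this]
    exact H.mul_mem (H.inv_mem hxx) hxsx
  refine hindex (index_eq_two_of_closure_insert_eq_top (S := {h, k}) ?_ hx hxx ?_)
  · rwa [Set.insert_comm, Set.pair_comm x k]
  · rintro s (rfl | rfl)
    exacts [⟨hh, conj_mem hxhx⟩, ⟨hk, conj_mem hxkx⟩]

theorem hasSeparatedGenerators_of_mem {h x y : G} (hgen : closure {h, x, y} = ⊤)
    (hh : h ∈ H) (hH : H ≠ ⊤) (hindex : H.index ≠ 2) : HasSeparatedGenerators H := by
  by_cases hx : x ∈ H
  · exact hasSeparatedGenerators_of_mem_of_mem hgen hh hx hH hindex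
  by_cases hy : y ∈ H
  · rw [Set.pair_comm] at hgen
    exact hasSeparatedGenerators_of_mem_of_mem hgen hh hy hH hindex
  by_cases hxy : CosetSeparated H x y
  · exact hasSeparatedGenerators_of_triple hgen
      (symm (cosetSeparated_of_notMem_of_mem hx hh))
      (symm (cosetSeparated_of_notMem_of_mem hy hh)) hxy
  rw [Set.pair_comm, Set.insert_comm] at hgen
  obtain ⟨k, hk, hgen⟩ := exists_mem_closure_insert_eq_top (by simp) hgen hxy
  exact hasSeparatedGenerators_of_mem_of_mem hgen hk hh hH hindex

theorem hasSeparatedGenerators_of_closure_triple {x y z : G} (hgen : closure {x, y, z} = ⊤)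
    (hH : H ≠ ⊤) (hindex : H.index ≠ 2) : HasSeparatedGenerators H := by
  by_cases hxy : CosetSeparated H x y
  · by_cases hxz : CosetSeparated H x z
    · by_cases hyz : CosetSeparated H y z
      · exact hasSeparatedGenerators_of_triple hgen hxy hxz hyz
      · rw [Set.pair_comm, Set.insert_comm] at hgen
        obtain ⟨h, hh, hgen⟩ := exists_mem_closure_insert_eq_top (by simp) hgen hyz
        exact hasSeparatedGenerators_of_mem hgen hh hH hindex
    · rw [Set.pair_comm, Set.insert_comm] at hgen
      obtain ⟨h, hh, hgen⟩ := exists_mem_closure_insert_eq_top (by simp) hgen hxz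
      exact hasSeparatedGenerators_of_mem hgen hh hH hindex
  · rw [Set.insert_comm] at hgen
    obtain ⟨h, hh, hgen⟩ := exists_mem_closure_insert_eq_top (by simp) hgen hxy
    exact hasSeparatedGenerators_of_mem hgen hh hH hindex

theorem hasSeparatedGenerators_of_rank_le_three [Group.FG G] (hrank : Group.rank G ≤ 3)
    (hindex : Group.rank G ≤ H.index) : HasSeparatedGenerators H := by
  classical
  obtain ⟨S, hcard, hgen⟩ := Group.rank_spec G
  have ne_top (hS : 2 ≤ S.card) : H ≠ ⊤ := by
    rintro rfl
    rw [index_top] at hindex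
    omega
  obtain hone | htwo | hthree : S.card ≤ 1 ∨ S.card = 2 ∨ S.card = 3 := by omega
  · exact ⟨S, (Finset.card_le_one_iff_subsingleton.1 hone).pairwise _, hgen⟩
  · have hH := ne_top htwo.ge
    obtain ⟨x, y, -, rfl⟩ := Finset.card_eq_two.1 htwo
    exact hasSeparatedGenerators_of_pair (by simpa using hgen) hH
  · have hH := ne_top (by omega)
    obtain ⟨x, y, z, -, -, -, rfl⟩ := Finset.card_eq_three.1 hthree
    exact hasSeparatedGenerators_of_closure_triple (by simpa using hgen) hH (by omega)

end

/-- For a finitely generated group `G` with `d(G) ≤ 3` and a finite index subgroup `H`,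
there is a left-right transversal for `H` generating `G` if and only if `[G:H] ≥ d(G)`. -/
theorem stmt_10 {G : Type*} [Group G] [Group.FG G] (hrank : Group.rank G ≤ 3)
    (H : Subgroup G) (hfin : H.index ≠ 0) :
    (∃ T : Set G, IsLeftTransversal H T ∧ IsRightTransversal H T ∧
      Subgroup.closure T = ⊤) ↔ Group.rank G ≤ H.index := by
  have : H.FiniteIndex := ⟨hfin⟩
  constructor
  · rintro ⟨T, hT, -, hgen⟩
    exact hT.rank_le_index hgen
  · intro hindex
    obtain ⟨S, hS, hgen⟩ := hasSeparatedGenerators_of_rank_le_three hrank hindex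
    obtain ⟨T, hST, hleft, hright⟩ := exists_leftRight_transversal_superset hS
    exact ⟨T, hleft, hright, closure_eq_top_of_subset hgen (hST.trans Subgroup.subset_closure)⟩
end

section
/- Let G be a group with d(G) = n, and let H be a subgroup of finite index in G with [G:H] < n + 2^n. Then at least one of the following holds: (1) H contains at least one primitive element of G; (2) H contains the square of every primitive element of G. -/
/-- A primitive element of a group `G` of finite rank: an element belonging to some
generating set of `G` of size exactly `d(G)`. -/
def IsPrimitive (G : Type*) [Group G] [Group.FG G] (g : G) : Prop :=
  ∃ S : Finset G, g ∈ S ∧ S.card = Group.rank G ∧ Subgroup.closure (S : Set G) = ⊤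

/-!
If `H` is disjoint from the double coset `K x K`, then `K` and `x K` meet disjoint families of left
cosets of `H`, equally many each, so adjoining `x` to `K` at least doubles `|K : H ∩ K|`. Suppose
that `H` contains no primitive element, and add to `⟨g⟩`, with `g` primitive, one by one the `n - 1`
other elements of a generating set of size `n`. Each step doubles the index because `k₁ x k₂` is
primitive whenever `k₁` and `k₂` lie in the subgroup generated by the elements other than `x`.
Hence `|G : H| ≥ 2 ^ (n - 1) * |⟨g⟩ : H ∩ ⟨g⟩|`, and the last factor is at least `3` unless
`g ^ 2 ∈ H`. Finally `n ≤ 2 ^ (n - 1)` gives `n + 2 ^ n ≤ 3 * 2 ^ (n - 1)` when `n ≥ 1`.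
-/

open MulAction
open scoped Pointwise

section RelIndex

variable {G : Type*} [Group G] {H K L : Subgroup G} {x : G}

theorem ncard_orbit_quotient_one (H K : Subgroup G) :
    (orbit K ((1 : G) : G ⧸ H)).ncard = H.relIndex K := by
  have stabilizer_eq : stabilizer K ((1 : G) : G ⧸ H) = H.subgroupOf K := by
    ext k
    have mem_iff : (k : G) ∈ stabilizer G ((1 : G) : G ⧸ H) ↔ (k : G) ∈ H := by
      rw [stabilizer_quotient]
    exact mem_iff
  rw [← index_stabilizer, stabilizer_eq, Subgroup.relIndex]

theorem disjoint_orbit_smul_orbit (hx : ∀ k₁ ∈ K, ∀ k₂ ∈ K, k₁ * x * k₂ ∉ H) :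
    Disjoint (orbit K ((1 : G) : G ⧸ H)) (x • orbit K ((1 : G) : G ⧸ H)) := by
  rw [Set.disjoint_left]
  rintro _ ⟨k₁, rfl⟩ ⟨_, ⟨k₂, rfl⟩, h⟩
  have mem_H : (k₁ * 1 : G)⁻¹ * (x * (k₂ * 1)) ∈ H := QuotientGroup.eq.1 h.symm
  exact hx _ (inv_mem k₁.2) _ k₂.2 (by simpa only [mul_one, mul_assoc] using mem_H)

theorem two_mul_relIndex_le_relIndex (hfin : H.relIndex L ≠ 0) (hKL : K ≤ L) (hxL : x ∈ L)
    (hx : ∀ k₁ ∈ K, ∀ k₂ ∈ K, k₁ * x * k₂ ∉ H) :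
    2 * H.relIndex K ≤ H.relIndex L := by
  set O := orbit K ((1 : G) : G ⧸ H)
  set P := orbit L ((1 : G) : G ⧸ H)
  have hP : P.Finite := Set.finite_of_ncard_ne_zero (by rwa [ncard_orbit_quotient_one])
  have hO : O ⊆ P := by
    rintro _ ⟨k, rfl⟩
    exact ⟨⟨k, hKL k.2⟩, rfl⟩
  have hxO : x • O ⊆ P := by
    rintro _ ⟨q, hq, rfl⟩
    exact mem_orbit_of_mem_orbit (⟨x, hxL⟩ : L) (hO hq)
  calc 2 * H.relIndex K = O.ncard + (x • O).ncard := by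
        rw [Set.ncard_smul_set, ncard_orbit_quotient_one, two_mul]
    _ = (O ∪ x • O).ncard := (Set.ncard_union_eq (disjoint_orbit_smul_orbit hx)
        (hP.subset hO) (hP.subset hxO)).symm
    _ ≤ P.ncard := Set.ncard_le_ncard (Set.union_subset hO hxO) hP
    _ = H.relIndex L := ncard_orbit_quotient_one H L

theorem two_pow_card_mul_relIndex_le_relIndex_sup_closure [DecidableEq G] {T : Finset G}
    (hfin : H.relIndex (K ⊔ Subgroup.closure T) ≠ 0)
    (hT : ∀ x ∈ T, ∀ k₁ ∈ K ⊔ Subgroup.closure (T.erase x : Set G),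
      ∀ k₂ ∈ K ⊔ Subgroup.closure (T.erase x : Set G), k₁ * x * k₂ ∉ H) :
    2 ^ T.card * H.relIndex K ≤ H.relIndex (K ⊔ Subgroup.closure T) := by
  induction T using Finset.induction_on with
  | empty => simp
  | insert x T hxT ih =>
    have sup_le_sup_insert :
        K ⊔ Subgroup.closure T ≤ K ⊔ Subgroup.closure (insert x T : Finset G) := by
      gcongr
      exact Finset.subset_insert x T
    have x_mem : x ∈ K ⊔ Subgroup.closure (insert x T : Finset G) :=
      Subgroup.mem_sup_right (Subgroup.subset_closure (Finset.mem_insert_self x T))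
    have ih : 2 ^ T.card * H.relIndex K ≤ H.relIndex (K ⊔ Subgroup.closure T) := by
      refine ih (mt (Subgroup.relIndex_eq_zero_of_le_right sup_le_sup_insert) hfin)
        fun y hy k₁ hk₁ k₂ hk₂ ↦ ?_
      have sup_le : K ⊔ Subgroup.closure (T.erase y : Set G) ≤
          K ⊔ Subgroup.closure ((insert x T).erase y : Set G) := by
        gcongr
        exact Finset.subset_insert x T
      exact hT y (Finset.mem_insert_of_mem hy) k₁ (sup_le hk₁) k₂ (sup_le hk₂)
    calc 2 ^ (insert x T).card * H.relIndex K = 2 * (2 ^ T.card * H.relIndex K) := by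
          rw [Finset.card_insert_of_notMem hxT, pow_succ', mul_assoc]
      _ ≤ 2 * H.relIndex (K ⊔ Subgroup.closure T) := by gcongr
      _ ≤ H.relIndex (K ⊔ Subgroup.closure (insert x T : Finset G)) := by
          refine two_mul_relIndex_le_relIndex hfin sup_le_sup_insert x_mem ?_
          simpa only [Finset.erase_insert hxT] using hT x (Finset.mem_insert_self x T)

theorem sq_mem_of_relIndex_lt_three (hfin : H.relIndex K ≠ 0) (hlt : H.relIndex K < 3)
    (hx : x ∈ K) : x ^ 2 ∈ H := by
  refine (Subgroup.pow_mem_of_relIndex_ne_zero_of_dvd hfin hx fun m hpos hle ↦ ?_).1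
  have : m = 1 ∨ m = 2 := by lia
  rcases this with rfl | rfl <;> norm_num

end RelIndex

section Primitive

variable {G : Type*} [Group G]

theorem closure_insert_mul_mul {s : Set G} {x k₁ k₂ : G} (hk₁ : k₁ ∈ Subgroup.closure s)
    (hk₂ : k₂ ∈ Subgroup.closure s) :
    Subgroup.closure (insert (k₁ * x * k₂) s) = Subgroup.closure (insert x s) := by
  have le_insert (y : G) : Subgroup.closure s ≤ Subgroup.closure (insert y s) :=
    Subgroup.closure_mono (Set.subset_insert y s)
  have mem_insert (y : G) : y ∈ Subgroup.closure (insert y s) :=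
    Subgroup.subset_closure (Set.mem_insert y s)
  have x_mem : k₁⁻¹ * (k₁ * x * k₂) * k₂⁻¹ ∈ Subgroup.closure (insert (k₁ * x * k₂) s) :=
    mul_mem (mul_mem (le_insert _ (inv_mem hk₁)) (mem_insert _)) (le_insert _ (inv_mem hk₂))
  apply le_antisymm <;> rw [Subgroup.closure_le, Set.insert_subset_iff]
  · exact ⟨mul_mem (mul_mem (le_insert _ hk₁) (mem_insert x)) (le_insert _ hk₂),
      Subgroup.subset_closure.trans (SetLike.coe_subset_coe.2 (le_insert x))⟩
  · exact ⟨by simpa [mul_assoc] using x_mem,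
      Subgroup.subset_closure.trans (SetLike.coe_subset_coe.2 (le_insert _))⟩

variable [Group.FG G] {H : Subgroup G} {g : G}

theorem isPrimitive_mul_mul [DecidableEq G] {S : Finset G} (hcard : S.card = Group.rank G)
    (hS : Subgroup.closure (S : Set G) = ⊤) {x k₁ k₂ : G} (hx : x ∈ S)
    (hk₁ : k₁ ∈ Subgroup.closure (S.erase x : Set G))
    (hk₂ : k₂ ∈ Subgroup.closure (S.erase x : Set G)) :
    IsPrimitive G (k₁ * x * k₂) := by
  have closure_eq_top :
      Subgroup.closure ((insert (k₁ * x * k₂) (S.erase x) : Finset G) : Set G) = ⊤ := by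
    rw [Finset.coe_insert, closure_insert_mul_mul hk₁ hk₂, ← Finset.coe_insert,
      Finset.insert_erase hx, hS]
  refine ⟨_, Finset.mem_insert_self _ _, le_antisymm ?_ (Group.rank_le closure_eq_top),
    closure_eq_top⟩
  rw [← hcard, ← Finset.card_erase_add_one hx]
  exact Finset.card_insert_le _ _

theorem two_pow_rank_mul_relIndex_zpowers_le (hfin : H.index ≠ 0)
    (hH : ∀ h ∈ H, ¬IsPrimitive G h) (hg : IsPrimitive G g) :
    2 ^ Group.rank G * H.relIndex (Subgroup.zpowers g) ≤ 2 * H.index := by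
  classical
  obtain ⟨S, hgS, hcard, hS⟩ := hg
  have zpowers_sup_closure (T : Finset G) :
      Subgroup.zpowers g ⊔ Subgroup.closure T = Subgroup.closure (insert g T : Finset G) := by
    rw [Subgroup.zpowers_eq_closure, ← Subgroup.closure_union, Finset.coe_insert,
      Set.singleton_union]
  have sup_eq_top : Subgroup.zpowers g ⊔ Subgroup.closure (S.erase g : Set G) = ⊤ := by
    rw [zpowers_sup_closure, Finset.insert_erase hgS, hS]
  have two_pow_card_le : 2 ^ (S.erase g).card * H.relIndex (Subgroup.zpowers g) ≤ H.index := by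
    rw [← H.relIndex_top_right, ← sup_eq_top] at hfin ⊢
    refine two_pow_card_mul_relIndex_le_relIndex_sup_closure hfin fun x hx k₁ hk₁ k₂ hk₂ hmem ↦ ?_
    obtain ⟨hxg, hxS⟩ := Finset.mem_erase.1 hx
    rw [zpowers_sup_closure, Finset.erase_right_comm,
      Finset.insert_erase (Finset.mem_erase.2 ⟨hxg.symm, hgS⟩)] at hk₁ hk₂
    exact hH _ hmem (isPrimitive_mul_mul hcard hS hxS hk₁ hk₂)
  rw [← hcard, ← Finset.card_erase_add_one hgS, pow_succ', mul_assoc]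
  gcongr

end Primitive

theorem two_mul_le_two_pow (n : ℕ) : 2 * n ≤ 2 ^ n := by
  cases n with
  | zero => simp
  | succ n =>
    rw [pow_succ']
    gcongr
    exact n.lt_two_pow_self

theorem stmt_13_general {G : Type*} [Group G] [Group.FG G] (n : ℕ) (hrank : Group.rank G = n)
    (H : Subgroup G) (hfin : H.index ≠ 0) (hidx : 2 * H.index < 3 * 2 ^ n) :
    (∃ g ∈ H, IsPrimitive G g) ∨ (∀ g : G, IsPrimitive G g → g ^ 2 ∈ H) := by
  subst hrank
  rw [or_iff_not_imp_left]
  intro hH g hg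
  push Not at hH
  have relIndex_lt : H.relIndex (Subgroup.zpowers g) < 3 := by
    refine lt_of_mul_lt_mul_left ?_ (Nat.zero_le (2 ^ Group.rank G))
    rw [mul_comm _ 3]
    exact (two_pow_rank_mul_relIndex_zpowers_le hfin hH hg).trans_lt hidx
  exact sq_mem_of_relIndex_lt_three (mt Subgroup.index_eq_zero_of_relIndex_eq_zero hfin) relIndex_lt
    (Subgroup.mem_zpowers g)

/-- If `d(G) = n` and `H` is a subgroup of finite index with `[G:H] < n + 2^n`, then
either `H` contains a primitive element of `G`, or `H` contains the square of every
primitive element of `G`. -/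
theorem stmt_13 {G : Type*} [Group G] [Group.FG G] (n : ℕ) (hrank : Group.rank G = n)
    (H : Subgroup G) (hfin : H.index ≠ 0) (hidx : H.index < n + 2 ^ n) :
    (∃ g ∈ H, IsPrimitive G g) ∨ (∀ g : G, IsPrimitive G g → g ^ 2 ∈ H) :=
  stmt_13_general n hrank H hfin (by linarith [two_mul_le_two_pow n])
end

section
/- Let G be a finitely generated group with d(G) = n and let H be a subgroup of G. Then H contains the square of every primitive element of G if and only if H is normal in G and the quotient G/H is isomorphic to C_2^m for some m ≤ n. -/
/-!
Let `H` contain the squares of all primitive elements. Conjugates of primitive elements are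
primitive, so these squares already lie in the normal core `N` of `H`. Take a generating set of
minimal size: its elements `x`, `y` are primitive, and so is `x * y` for `x ≠ y`, because replacing
`y` by `x * y` yields another generating set of the same size. Hence in `G ⧸ N` the generators and
their pairwise products are killed by squaring, so the generators commute and `G ⧸ N` has exponent
dividing two. Thus `H` contains every square, and `G ⧸ H` is a vector space over `ZMod 2`.
-/

section Closure

variable {G : Type*} [Group G]

lemma closure_insert_mul_sdiff_singleton {S : Set G} {x y : G} (hx : x ∈ S) (hy : y ∈ S)
    (hxy : x ≠ y) :
    Subgroup.closure (insert (x * y) (S \ {y})) = Subgroup.closure S := by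
  apply le_antisymm
  · rw [Subgroup.closure_le, Set.insert_subset_iff]
    exact ⟨mul_mem (Subgroup.subset_closure hx) (Subgroup.subset_closure hy),
      Set.sdiff_subset.trans Subgroup.subset_closure⟩
  · rw [Subgroup.closure_le]
    intro z hz
    by_cases hzy : z = y
    · have hx' : x ∈ Subgroup.closure (insert (x * y) (S \ {y})) :=
        Subgroup.subset_closure (Or.inr ⟨hx, hxy⟩)
      have hmul : x * y ∈ Subgroup.closure (insert (x * y) (S \ {y})) :=
        Subgroup.subset_closure (Or.inl rfl)
      rw [hzy]
      exact (Subgroup.mul_mem_cancel_left _ hx').mp hmul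
    · exact Subgroup.subset_closure (Or.inr ⟨hz, hzy⟩)

lemma commute_of_sq_eq_one {x y : G} (hx : x ^ 2 = 1) (hy : y ^ 2 = 1) (hxy : (x * y) ^ 2 = 1) :
    Commute x y := by
  rw [pow_two, mul_eq_one_iff_eq_inv] at hx hy hxy
  calc
    x * y = y⁻¹ * x⁻¹ := by rw [hxy, mul_inv_rev]
    _ = y * x := by rw [← hx, ← hy]

lemma pow_eq_one_of_mem_closure {S : Set G} {n : ℕ} (hcomm : ∀ x ∈ S, ∀ y ∈ S, Commute x y)
    (hpow : ∀ x ∈ S, x ^ n = 1) {g : G} (hg : g ∈ Subgroup.closure S) : g ^ n = 1 := by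
  have := Subgroup.isMulCommutative_closure hcomm
  induction hg using Subgroup.closure_induction with
  | mem x hx => exact hpow x hx
  | one => exact one_pow n
  | mul a b ha hb iha ihb =>
    have hab : Commute a b := setLike_mul_comm ha hb
    rw [hab.mul_pow, iha, ihb, one_mul]
  | inv a _ iha => rw [inv_pow, iha, inv_one]

lemma sq_mem_of_closure_eq_top {S : Set G} (hS : Subgroup.closure S = ⊤) {N : Subgroup G}
    [N.Normal] (hsq : ∀ x ∈ S, x ^ 2 ∈ N)
    (hmul : ∀ x ∈ S, ∀ y ∈ S, x ≠ y → (x * y) ^ 2 ∈ N) (g : G) : g ^ 2 ∈ N := by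
  simp only [← QuotientGroup.eq_one_iff, QuotientGroup.mk_pow, QuotientGroup.mk_mul] at hsq hmul ⊢
  have hcomm : ∀ x ∈ S, ∀ y ∈ S, Commute (x : G ⧸ N) y := by
    intro x hx y hy
    obtain rfl | hxy := eq_or_ne x y
    · exact Commute.refl _
    · exact commute_of_sq_eq_one (hsq x hx) (hsq y hy) (hmul x hx y hy hxy)
  have hg : QuotientGroup.mk' N g ∈ Subgroup.closure (QuotientGroup.mk' N '' S) := by
    rw [← MonoidHom.map_closure, hS]
    exact Subgroup.mem_map_of_mem _ (Subgroup.mem_top g)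
  exact pow_eq_one_of_mem_closure (by simpa using hcomm) (by simpa using hsq) hg

end Closure

section Primitive

variable {G : Type*} [Group G] [Group.FG G]

lemma isPrimitive_of_card_le_rank {S : Finset G} (hcard : S.card ≤ Group.rank G)
    (hS : Subgroup.closure (S : Set G) = ⊤) {g : G} (hg : g ∈ S) : IsPrimitive G g :=
  ⟨S, hg, hcard.antisymm (Group.rank_le hS), hS⟩

lemma isPrimitive_mul {S : Finset G} (hcard : S.card ≤ Group.rank G)
    (hS : Subgroup.closure (S : Set G) = ⊤) {x y : G} (hx : x ∈ S) (hy : y ∈ S) (hxy : x ≠ y) :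
    IsPrimitive G (x * y) := by
  classical
  refine isPrimitive_of_card_le_rank (S := insert (x * y) (S.erase y)) ?_ ?_
    (Finset.mem_insert_self _ _)
  · calc
      (insert (x * y) (S.erase y)).card ≤ (S.erase y).card + 1 := Finset.card_insert_le _ _
      _ = S.card := Finset.card_erase_add_one hy
      _ ≤ Group.rank G := hcard
  · rw [Finset.coe_insert, Finset.coe_erase, closure_insert_mul_sdiff_singleton hx hy hxy, hS]

lemma IsPrimitive.map_mulEquiv {G' : Type*} [Group G'] [Group.FG G'] {g : G}
    (hg : IsPrimitive G g) (e : G ≃* G') : IsPrimitive G' (e g) := by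
  classical
  obtain ⟨S, hgS, hcard, hS⟩ := hg
  refine isPrimitive_of_card_le_rank (S := S.image e) ?_ ?_ (Finset.mem_image_of_mem e hgS)
  · calc
      (S.image e).card ≤ S.card := Finset.card_image_le
      _ = Group.rank G' := hcard.trans (Group.rank_congr e)
  · rw [Finset.coe_image]
    exact (MonoidHom.map_closure (e : G →* G') S).symm.trans
      (hS ▸ Subgroup.map_top_of_surjective _ e.surjective)

lemma IsPrimitive.sq_mem_normalCore {H : Subgroup G}
    (hH : ∀ g : G, IsPrimitive G g → g ^ 2 ∈ H) {g : G} (hg : IsPrimitive G g) :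
    g ^ 2 ∈ H.normalCore := by
  intro c
  rw [← conj_pow]
  exact hH _ (hg.map_mulEquiv (MulAut.conj c))

theorem forall_isPrimitive_sq_mem_iff {H : Subgroup G} :
    (∀ g : G, IsPrimitive G g → g ^ 2 ∈ H) ↔ ∀ g : G, g ^ 2 ∈ H := by
  refine ⟨fun hH g => ?_, fun hH g _ => hH g⟩
  obtain ⟨S, hcard, hS⟩ := Group.rank_spec G
  refine H.normalCore_le (sq_mem_of_closure_eq_top hS (fun x hx => ?_) (fun x hx y hy hxy => ?_) g)
  · exact (isPrimitive_of_card_le_rank hcard.le hS hx).sq_mem_normalCore hH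
  · exact (isPrimitive_mul hcard.le hS hx hy hxy).sq_mem_normalCore hH

end Primitive

section ElementaryAbelian

variable {G : Type*} [Group G]

lemma normal_of_forall_sq_mem {H : Subgroup G} (hH : ∀ g : G, g ^ 2 ∈ H) : H.Normal where
  conj_mem x hx g := by
    have hconj : g * x * g⁻¹ = (g * x) ^ 2 * x⁻¹ * (g ^ 2)⁻¹ := by
      simp only [pow_two]
      group
    rw [hconj]
    exact mul_mem (mul_mem (hH _) (inv_mem hx)) (inv_mem (hH _))

lemma quotient_pow_eq_one {H : Subgroup G} [H.Normal] {n : ℕ} (hH : ∀ g : G, g ^ n ∈ H)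
    (q : G ⧸ H) : q ^ n = 1 := by
  induction q using QuotientGroup.induction_on with
  | H g => exact (QuotientGroup.eq_one_iff _).mpr (hH g)

lemma isMulCommutative_quotient_of_forall_sq_mem {H : Subgroup G} [H.Normal]
    (hH : ∀ g : G, g ^ 2 ∈ H) : IsMulCommutative (G ⧸ H) :=
  ⟨⟨Commute.of_orderOf_dvd_two fun q => orderOf_dvd_of_pow_eq_one (quotient_pow_eq_one hH q)⟩⟩

lemma exists_mulEquiv_pi_zmod {A : Type*} [CommGroup A] [Group.FG A] {p : ℕ} [Fact p.Prime]
    (hA : ∀ a : A, a ^ p = 1) :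
    ∃ m ≤ Group.rank A, Nonempty (A ≃* Multiplicative (Fin m → ZMod p)) := by
  let : Module (ZMod p) (Additive A) := AddCommGroup.zmodModule (n := p) fun a => hA a.toMul
  have hp : p.Prime := Fact.out
  have hdvd : Nat.card A ∣ p ^ Group.rank A := card_dvd_exponent_pow_rank' A hA
  have : Finite A :=
    Nat.finite_of_card_ne_zero (ne_zero_of_dvd_ne_zero (pow_ne_zero _ hp.ne_zero) hdvd)
  have hcard : p ^ Module.finrank (ZMod p) (Additive A) = Nat.card A :=
    FiniteField.pow_finrank_eq_natCard p (Additive A)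
  have hrank : Module.finrank (ZMod p) (Additive A) ≤ Group.rank A :=
    (Nat.pow_dvd_pow_iff_le_right hp.one_lt).mp (hcard ▸ hdvd)
  let coordinates := (Module.finBasis (ZMod p) (Additive A)).equivFun
  exact ⟨_, hrank, ⟨AddEquiv.toMultiplicativeRight coordinates.toAddEquiv⟩⟩

open scoped IsMulCommutative in
lemma exists_surjective_pi_zmod_ker_eq [Group.FG G] {p : ℕ} [Fact p.Prime] {H : Subgroup G}
    [H.Normal] [IsMulCommutative (G ⧸ H)] (hH : ∀ g : G, g ^ p ∈ H) :
    ∃ m ≤ Group.rank G, ∃ φ : G →* Multiplicative (Fin m → ZMod p),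
      Function.Surjective φ ∧ φ.ker = H := by
  obtain ⟨m, hm, ⟨e⟩⟩ := exists_mulEquiv_pi_zmod (quotient_pow_eq_one hH)
  have hrank : Group.rank (G ⧸ H) ≤ Group.rank G :=
    Group.rank_le_of_surjective _ (QuotientGroup.mk'_surjective H)
  refine ⟨m, hm.trans hrank, (e : G ⧸ H →* _).comp (QuotientGroup.mk' H),
    e.surjective.comp (QuotientGroup.mk'_surjective H), ?_⟩
  rw [MonoidHom.ker_mulEquiv_comp, QuotientGroup.ker_mk']

lemma pow_mem_ker_of_zmodModule {A : Type*} [AddCommGroup A] (n : ℕ) [Module (ZMod n) A]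
    (φ : G →* Multiplicative A) (g : G) : g ^ n ∈ φ.ker := by
  rw [MonoidHom.mem_ker, map_pow]
  exact ZModModule.char_nsmul_eq_zero n (φ g).toAdd

end ElementaryAbelian

/-- If `d(G) = n` and `H ≤ G`, then `H` contains the square of every primitive element of
`G` if and only if `H` is normal in `G` and `G ⧸ H ≅ C₂^m` for some `m ≤ n` (expressed via
a surjective homomorphism onto `C₂^m` with kernel `H`). -/
theorem stmt_14 {G : Type*} [Group G] [Group.FG G] (n : ℕ) (hrank : Group.rank G = n)
    (H : Subgroup G) :
    (∀ g : G, IsPrimitive G g → g ^ 2 ∈ H) ↔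
      (H.Normal ∧ ∃ m ≤ n, ∃ φ : G →* Multiplicative (Fin m → ZMod 2),
        Function.Surjective φ ∧ φ.ker = H) := by
  subst hrank
  rw [forall_isPrimitive_sq_mem_iff]
  constructor
  · intro hsq
    have hnormal : H.Normal := normal_of_forall_sq_mem hsq
    have := isMulCommutative_quotient_of_forall_sq_mem hsq
    exact ⟨hnormal, exists_surjective_pi_zmod_ker_eq hsq⟩
  · rintro ⟨-, m, -, φ, -, rfl⟩ g
    exact pow_mem_ker_of_zmodModule 2 φ g
end

section
/- Let G be a group with d(G) = n and let N be a normal subgroup of G. If N contains a primitive element of G, then every coset of N in G contains a primitive element of G. -/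
/-!
Split a minimal generating set as `T ∪ {a}` with `a ∈ N`. Then `⟨T⟩` maps onto `G ⧸ N`, so each
coset of `N` has a representative `w ∈ ⟨T⟩`. Since `a ∈ N`, that coset also contains `w * a`, which
is primitive because it can replace `a` in the generating set.
-/

section Closure

variable {G : Type*} [Group G] {s : Set G} {a w : G}

theorem closure_insert_mul_left_le (hw : w ∈ Subgroup.closure s) :
    Subgroup.closure (insert (w * a) s) ≤ Subgroup.closure (insert a s) := by
  have hs : Subgroup.closure s ≤ Subgroup.closure (insert a s) :=
    Subgroup.closure_mono (Set.subset_insert a s)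
  rw [Subgroup.closure_le, Set.insert_subset_iff]
  exact ⟨mul_mem (hs hw) (Subgroup.mem_closure_of_mem (Set.mem_insert a s)),
    Subgroup.subset_closure.trans hs⟩

theorem closure_insert_mul_left (hw : w ∈ Subgroup.closure s) :
    Subgroup.closure (insert (w * a) s) = Subgroup.closure (insert a s) := by
  refine (closure_insert_mul_left_le hw).antisymm ?_
  simpa only [inv_mul_cancel_left] using closure_insert_mul_left_le (a := w * a) (inv_mem hw)

theorem closure_insert_le_closure_sup {H : Subgroup G} (ha : a ∈ H) :
    Subgroup.closure (insert a s) ≤ Subgroup.closure s ⊔ H := by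
  rw [Subgroup.closure_le, Set.insert_subset_iff]
  exact ⟨Subgroup.mem_sup_right ha, Subgroup.subset_closure.trans (le_sup_left (b := H))⟩

end Closure

/-- The inequality suffices because a generating set never has fewer than `d(G)` elements. -/
theorem isPrimitive_iff_exists_closure_insert {G : Type*} [Group G] [Group.FG G] {a : G} :
    IsPrimitive G a ↔
      ∃ T : Finset G, T.card < Group.rank G ∧ Subgroup.closure (insert a (T : Set G)) = ⊤ := by
  classical
  constructor
  · rintro ⟨S, ha, hcard, hS⟩
    refine ⟨S.erase a, hcard ▸ Finset.card_erase_lt_of_mem ha, ?_⟩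
    rwa [← Finset.coe_insert, Finset.insert_erase ha]
  · rintro ⟨T, hcard, hT⟩
    rw [← Finset.coe_insert] at hT
    exact ⟨insert a T, Finset.mem_insert_self a T,
      ((Finset.card_insert_le a T).trans hcard).antisymm (Group.rank_le hT), hT⟩

/-- If `d(G) = n` and the normal subgroup `N` of `G` contains a primitive element of `G`,
then every (left) coset of `N` in `G` contains a primitive element of `G`. -/
theorem stmt_17 {G : Type*} [Group G] [Group.FG G] (n : ℕ) (hrank : Group.rank G = n)
    (N : Subgroup G) [N.Normal] (hprim : ∃ g ∈ N, IsPrimitive G g) :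
    ∀ g : G, ∃ x : G, g⁻¹ * x ∈ N ∧ IsPrimitive G x := by
  intro g
  obtain ⟨a, haN, ha⟩ := hprim
  obtain ⟨T, hcard, hT⟩ := isPrimitive_iff_exists_closure_insert.mp ha
  have hg : g ∈ Subgroup.closure (T : Set G) ⊔ N :=
    closure_insert_le_closure_sup haN (hT ▸ Subgroup.mem_top g)
  obtain ⟨w, hw, m, hm, rfl⟩ := Subgroup.mem_sup_of_normal_right.mp hg
  have hcoset : (w * m)⁻¹ * (w * a) ∈ N := by
    simpa only [mul_inv_rev, mul_assoc, inv_mul_cancel_left] using mul_mem (inv_mem hm) haN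
  have hgen : Subgroup.closure (insert (w * a) (T : Set G)) = ⊤ :=
    (closure_insert_mul_left hw).trans hT
  exact ⟨w * a, hcoset, isPrimitive_iff_exists_closure_insert.mpr ⟨T, hcard, hgen⟩⟩
end

section
/- Let n ≥ 2, let G be a group with d(G) ≥ n, and let H be a subgroup of G of index n + 2. If S is a generating n-tuple of G such that no two distinct entries of S lie in the same left coset of H and no entry of S lies in H, then every left coset of H other than H itself contains a primitive element of G. -/
/- Let `a` be the coset `H` and `b ≠ a` a coset without an entry of `S`; by counting, every
remaining coset is some `S j • a`. The action of `G` on the cosets is transitive, so some generator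
`S i` moves `b`, and then `S i • b` is `a` or some `S j • a` with `j ≠ i`. Hence `(S i)⁻¹` or
`(S i)⁻¹ * S j` sends `a` to `b`, and a Nielsen move puts that element in place of `S i`. -/

section GeneratingFamilies

variable {G ι : Type*} [Group G] {S : ι → G}

lemma isPrimitive_of_closure_range_eq_top [Group.FG G] [Fintype ι]
    (hS : Subgroup.closure (Set.range S) = ⊤) (hrank : Fintype.card ι ≤ Group.rank G) (i : ι) :
    IsPrimitive G (S i) := by
  classical
  have hclosure : Subgroup.closure ((Finset.univ.image S : Finset G) : Set G) = ⊤ := by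
    simpa using hS
  exact ⟨Finset.univ.image S, Finset.mem_image_of_mem S (Finset.mem_univ i),
    le_antisymm (Finset.card_image_le.trans hrank) (Group.rank_le hclosure), hclosure⟩

variable [DecidableEq ι]

lemma closure_range_update_eq_top (hS : Subgroup.closure (Set.range S) = ⊤) {i : ι} {x : G}
    (hi : S i ∈ Subgroup.closure (Set.range (Function.update S i x))) :
    Subgroup.closure (Set.range (Function.update S i x)) = ⊤ := by
  rw [eq_top_iff, ← hS, Subgroup.closure_le]
  rintro _ ⟨j, rfl⟩
  obtain rfl | hji := eq_or_ne j i
  · exact hi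
  · exact Subgroup.subset_closure ⟨j, Function.update_of_ne hji x S⟩

lemma closure_range_update_inv_eq_top (hS : Subgroup.closure (Set.range S) = ⊤) (i : ι) :
    Subgroup.closure (Set.range (Function.update S i (S i)⁻¹)) = ⊤ :=
  closure_range_update_eq_top hS <|
    inv_mem_iff.mp <| Subgroup.subset_closure ⟨i, Function.update_self ..⟩

lemma closure_range_update_inv_mul_eq_top (hS : Subgroup.closure (Set.range S) = ⊤) {i j : ι}
    (hji : j ≠ i) :
    Subgroup.closure (Set.range (Function.update S i ((S i)⁻¹ * S j))) = ⊤ := by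
  apply closure_range_update_eq_top hS
  set K := Subgroup.closure (Set.range (Function.update S i ((S i)⁻¹ * S j)))
  have hj : S j ∈ K := Subgroup.subset_closure ⟨j, Function.update_of_ne hji ..⟩
  have hquot : (S i)⁻¹ * S j ∈ K := Subgroup.subset_closure ⟨i, Function.update_self ..⟩
  exact inv_mem_iff.mp ((K.mul_mem_cancel_right hj).mp hquot)

end GeneratingFamilies

section Actions

variable {G X ι : Type*} [Group G] [MulAction G X] [MulAction.IsPretransitive G X] {S : ι → G}

lemma exists_smul_ne_of_closure_range_eq_top [Nontrivial X]
    (hS : Subgroup.closure (Set.range S) = ⊤) (b : X) : ∃ i, S i • b ≠ b := by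
  by_contra! hfix
  have hstab : MulAction.stabilizer G b = ⊤ := by
    rw [eq_top_iff, ← hS, Subgroup.closure_le]
    rintro _ ⟨i, rfl⟩
    exact hfix i
  obtain ⟨a, hab⟩ := exists_ne b
  obtain ⟨g, hg⟩ := MulAction.exists_smul_eq G b a
  have hgb : g ∈ MulAction.stabilizer G b := hstab ▸ Subgroup.mem_top g
  exact hab (hg.symm.trans hgb)

theorem exists_generating_family_smul_eq (hS : Subgroup.closure (Set.range S) = ⊤) {a b : X}
    (hab : a ≠ b) (hcover : ∀ c, c = a ∨ c = b ∨ ∃ j, S j • a = c) :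
    ∃ T : ι → G, Subgroup.closure (Set.range T) = ⊤ ∧ ∃ i, T i • a = b := by
  classical
  have : Nontrivial X := ⟨a, b, hab⟩
  obtain ⟨i, hi⟩ := exists_smul_ne_of_closure_range_eq_top hS b
  obtain hSib | hSib | ⟨j, hj⟩ := hcover (S i • b)
  · refine ⟨_, closure_range_update_inv_eq_top hS i, i, ?_⟩
    rw [Function.update_self, ← hSib, inv_smul_smul]
  · exact absurd hSib hi
  · have hji : j ≠ i := by
      rintro rfl
      exact hab (smul_left_cancel _ hj)
    refine ⟨_, closure_range_update_inv_mul_eq_top hS hji, i, ?_⟩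
    rw [Function.update_self, mul_smul, hj, inv_smul_smul]

end Actions

lemma eq_or_eq_or_exists_of_card_eq_add_two {ι X : Type*} [Fintype ι] {f : ι → X}
    (hf : Function.Injective f) (hcard : Nat.card X = Fintype.card ι + 2) {a b : X}
    (hab : a ≠ b) (ha : ∀ i, f i ≠ a) (hb : ∀ i, f i ≠ b) (c : X) :
    c = a ∨ c = b ∨ ∃ i, f i = c := by
  have : Finite X := Nat.finite_of_card_ne_zero (by omega)
  have hcover : insert a (insert b (Set.range f)) = Set.univ := by
    rw [Set.eq_univ_iff_ncard, Set.ncard_insert_of_notMem (by simp [hab, ha]),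
      Set.ncard_insert_of_notMem (by simpa using hb), Set.ncard_range_of_injective hf,
      Nat.card_eq_fintype_card, hcard]
  exact hcover.ge (Set.mem_univ c)

theorem stmt_18_general {G ι : Type*} [Group G] [Fintype ι] (H : Subgroup G)
    (hidx : H.index = Fintype.card ι + 2) (S : ι → G)
    (hS : Subgroup.closure (Set.range S) = ⊤)
    (hclean : ∀ i j, i ≠ j → (S i)⁻¹ * S j ∉ H) (hout : ∀ i, S i ∉ H) (g : G) (hg : g ∉ H) :
    ∃ T : ι → G, Subgroup.closure (Set.range T) = ⊤ ∧ ∃ i, g⁻¹ * T i ∈ H := by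
  by_cases hgS : ∃ i, g⁻¹ * S i ∈ H
  · exact ⟨S, hS, hgS⟩
  push Not at hgS
  have ne_one {x : G} (hx : x ∉ H) : (x : G ⧸ H) ≠ (1 : G) := by
    rwa [ne_comm, Ne, QuotientGroup.eq, inv_one, one_mul]
  have smul_one (x : G) : x • ((1 : G) : G ⧸ H) = x := by
    rw [MulAction.Quotient.smul_coe, smul_eq_mul, mul_one]
  have hinj : Function.Injective fun i ↦ (S i : G ⧸ H) := fun i j hij ↦ by
    by_contra hne
    exact hclean i j hne (QuotientGroup.eq.mp hij)
  have hcover := eq_or_eq_or_exists_of_card_eq_add_two hinj hidx (ne_one hg).symm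
    (fun i ↦ ne_one (hout i)) fun i hi ↦ hgS i (QuotientGroup.eq.mp hi.symm)
  obtain ⟨T, hT, i, hi⟩ := exists_generating_family_smul_eq hS (ne_one hg).symm
    (by simpa only [smul_one] using hcover)
  exact ⟨T, hT, i, QuotientGroup.eq.mp (hi.symm.trans (smul_one _))⟩

/-- Let `n ≥ 2`, `d(G) ≥ n`, and `H` a subgroup of `G` of index `n + 2`.  If `S` is a
generating `n`-tuple of `G` such that no two distinct entries of `S` lie in the same left
coset of `H` and no entry of `S` lies in `H`, then every left coset of `H` other than `H`
itself contains a primitive element of `G`. -/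
theorem stmt_18 {G : Type*} [Group G] [Group.FG G] (n : ℕ) (hn : 2 ≤ n)
    (hrank : n ≤ Group.rank G) (H : Subgroup G) (hidx : H.index = n + 2)
    (S : Fin n → G) (hS : Subgroup.closure (Set.range S) = ⊤)
    (hclean : ∀ i j, i ≠ j → (S i)⁻¹ * S j ∉ H) (hout : ∀ i, S i ∉ H) :
    ∀ g : G, g ∉ H → ∃ x : G, g⁻¹ * x ∈ H ∧ IsPrimitive G x := by
  intro g hg
  obtain ⟨T, hT, i, hi⟩ := stmt_18_general H (by simpa using hidx) S hS hclean hout g hg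
  exact ⟨T i, hi, isPrimitive_of_closure_range_eq_top hT (by simpa using hrank) i⟩
end
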